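/- Let 𝓑 ⊆ ℕ be such that η* is a regular Toeplitz sequence. Then P(X_η) = P(X_{η'}), where η' = 1_{F_{𝓑'}} and 𝓑' is the tautification of 𝓑. -/

import Mathlib

/-!
Two facts give the equality. First, every word of `η'` occurs in `η`, so that `X_{η'} ⊆ X_η` and
invariant measures on `X_{η'}` are invariant measures on `X_η`. Second, when `η*` is a regular
Toeplitz sequence, a word that does not occur in `η'` has occurrences of Banach density zero in `η`
(`small_occ`); hence its cylinder is null for every invariant measure on `X_η`
(`measure_occ_le`), and as there are countably many words such a measure is carried by `X_{η'}`.

Both facts come from `realize`: if, for a modulus `s`, no position `m + i` with `i ∈ P` meets an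
obstruction modulo `s` to being `𝓑'`-free (`Good`), and every other position `m + i` is divisible by
some `d ∣ s` with `d ∈ Dt B`, then some `m'` has its pattern equal to `P` both for `𝓑` and for `𝓑'`.
Membership in `Dt B` means that `d * a ∈ B` for some `a` coprime to any prescribed modulus, and so
the multiples of `B` can be forced one after the other by the Chinese remainder theorem, without
touching the positions in `P` (`Good.step`). The positions in `P` are then made free inside the
residue class reached (`Good.exists_free`). This uses that `𝓑'` is taut: if `d` is `𝓑'`-free, then
`{a | d * a ∈ 𝓑'}` is not Behrend, hence its part coprime to a suitable modulus has a set of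
multiples of small density (`tail_small`), also inside residue classes (`T_progression`). For the
passage between finite sets of multiples and logarithmic density the required input is the
inequality `T_le_dens`, which is an instance of the four functions theorem.

For a word of `η'`, the `𝓑'`-multiples provide the elements of `Dt B`, because `Cset B ⊆ Dt B`. For a
word of `η` at a position `m`, almost every zero lies in a periodic position of `η*` by regularity,
so that a residue class consists of multiples of `𝓑*`; by Dirichlet's theorem on primes in
arithmetic progressions the class has a common divisor in `Dt B` (`exists_Dt_of_class`). The
conditions in `Good` fail only for `m` in a set of small Banach density, because the multiples of an
element of `Cset B` that are `𝓑`-free have Banach density zero (`small_of_mem_Cset`). Thus for almost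
every occurrence in `η` the word also occurs in `η'`.
-/


open MeasureTheory Filter Topology
open scoped Classical

noncomputable section
namespace BFree


def cnt (A : Set ℤ) (L : ℕ) : ℝ := ∑ n ∈ Finset.Icc (1:ℤ) (L:ℤ), if n ∈ A then (1:ℝ) else 0

def natDensity (A : Set ℤ) (d : ℝ) : Prop := Tendsto (fun L : ℕ => cnt A L / L) atTop (𝓝 d)

def upperDensity (A : Set ℤ) : ℝ := atTop.limsup fun L : ℕ => cnt A L / L

def lowerDensity (A : Set ℤ) : ℝ := atTop.liminf fun L : ℕ => cnt A L / L

def logDensity (A : Set ℤ) (d : ℝ) : Prop :=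
  Tendsto (fun L : ℕ =>
      (∑ n ∈ Finset.Icc (1:ℤ) (L:ℤ), if n ∈ A then (n:ℝ)⁻¹ else 0) / Real.log L)
    atTop (𝓝 d)

def MB (B : Set ℕ) : Set ℤ := {n : ℤ | ∃ b ∈ B, (b:ℤ) ∣ n}

def FB (B : Set ℕ) : Set ℤ := {n : ℤ | n ∉ MB B}

def eta (B : Set ℕ) : ℤ → Bool := fun n => if n ∈ FB B then true else false

def shift (x : ℤ → Bool) : ℤ → Bool := fun n => x (n + 1)

def shiftn (k : ℕ) (x : ℤ → Bool) : ℤ → Bool := fun n => x (n + (k:ℤ))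

def orbitClosure (x : ℤ → Bool) : Set (ℤ → Bool) :=
  closure {y | ∃ m : ℤ, y = fun n => x (n + m)}

def Xeta (B : Set ℕ) : Set (ℤ → Bool) := orbitClosure (eta B)

def InvM (X : Set (ℤ → Bool)) : Set (Measure (ℤ → Bool)) :=
  {μ | IsProbabilityMeasure μ ∧ μ.map shift = μ ∧ μ X = 1}

def primPart (S : Set ℕ) : Set ℕ := {b ∈ S | ∀ b' ∈ S, b' ∣ b → b' = b}

def Dset (B : Set ℕ) : Set ℕ :=
  {d | ∃ A : Set ℕ, A.Infinite ∧ (∀ a ∈ A, 0 < a) ∧ A.Pairwise Nat.Coprime ∧ ∀ a ∈ A, d * a ∈ B}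

def Bstar (B : Set ℕ) : Set ℕ := primPart (B ∪ Dset B)

def etaStar (B : Set ℕ) : ℤ → Bool := eta (Bstar B)

def Behrend (A : Set ℕ) : Prop := (∀ a ∈ A, 0 < a) ∧ logDensity (MB A) 1

def Cset (B : Set ℕ) : Set ℕ := {c | ∃ A : Set ℕ, Behrend A ∧ ∀ a ∈ A, c * a ∈ B}

def Bprime (B : Set ℕ) : Set ℕ := primPart (B ∪ Cset B)

def etaPrime (B : Set ℕ) : ℤ → Bool := eta (Bprime B)

def Taut (B : Set ℕ) : Prop :=
  ∀ b ∈ B, ∃ d1 d2 : ℝ, logDensity (MB (B \ {b})) d1 ∧ logDensity (MB B) d2 ∧ d1 < d2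

def Per (x : ℤ → Bool) (s : ℕ) : Set ℤ := {i | ∀ k : ℤ, x (i + (s:ℤ) * k) = x i}

def IsToeplitz (x : ℤ → Bool) : Prop := ∀ i : ℤ, ∃ s : ℕ, 0 < s ∧ i ∈ Per x s

def RegularToeplitz (x : ℤ → Bool) : Prop :=
  IsToeplitz x ∧ ∃ δ : ℕ → ℝ,
    (∀ r : ℕ, natDensity (⋃ s ∈ Finset.Icc 1 r, Per x s) (δ r)) ∧ Tendsto δ atTop (𝓝 1)

def QuasiGeneric (ℓ : ℕ → ℕ) (x : ℤ → Bool) (ν : Measure (ℤ → Bool)) : Prop :=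
  ∀ f : C((ℤ → Bool), ℝ),
    Tendsto (fun i => (∑ n ∈ Finset.Icc 1 (ℓ i), f (shiftn n x)) / (ℓ i : ℝ)) atTop
      (𝓝 (∫ y, f y ∂ν))

def RealizesLowerDensity (A : Set ℤ) (ℓ : ℕ → ℕ) : Prop :=
  Tendsto ℓ atTop atTop ∧ Tendsto (fun i => cnt A (ℓ i) / (ℓ i : ℝ)) atTop (𝓝 (lowerDensity A))

def IsMirsky (B : Set ℕ) (ν : Measure (ℤ → Bool)) : Prop :=
  IsProbabilityMeasure ν ∧ ∀ ℓ : ℕ → ℕ, RealizesLowerDensity (MB B) ℓ → QuasiGeneric ℓ (eta B) ν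

def blocks (X : Set (ℤ → Bool)) (n : ℕ) : Set (Fin n → Bool) :=
  {w | ∃ x ∈ X, ∃ m : ℤ, ∀ i : Fin n, x (m + (i:ℤ)) = w i}

def pCount (X : Set (ℤ → Bool)) (n : ℕ) : ℕ := (blocks X n).ncard

def topEnt (X : Set (ℤ → Bool)) : ℝ :=
  atTop.limsup fun n : ℕ => Real.logb 2 (pCount X n) / n

def cylinder {n : ℕ} (w : Fin n → Bool) : Set (ℤ → Bool) := {x | ∀ i : Fin n, x ((i:ℕ):ℤ) = w i}

def blockEntropy (μ : Measure (ℤ → Bool)) (n : ℕ) : ℝ :=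
  -∑ w : Fin n → Bool, ((μ (cylinder w)).toReal * Real.logb 2 (μ (cylinder w)).toReal)

def measEnt (μ : Measure (ℤ → Bool)) : ℝ := atTop.liminf fun n : ℕ => blockEntropy μ n / n

/-! ### A correlation inequality for divisors -/

open scoped FinsetFamily in
/-- The four functions theorem on the lattice of divisors of `M`, with `gcd` and `lcm`. -/
theorem four_functions_divisors (f₁ f₂ f₃ f₄ : ℕ → ℝ) (h₁ : ∀ a, 0 ≤ f₁ a) (h₂ : ∀ a, 0 ≤ f₂ a)
    (h₃ : ∀ a, 0 ≤ f₃ a) (h₄ : ∀ a, 0 ≤ f₄ a)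
    (h : ∀ a b, f₁ a * f₂ b ≤ f₃ (a.gcd b) * f₄ (a.lcm b)) {M : ℕ} (hM : 0 < M) :
    (∑ a ∈ M.divisors, f₁ a) * (∑ a ∈ M.divisors, f₂ a) ≤
      (∑ a ∈ M.divisors, f₃ a) * (∑ a ∈ M.divisors, f₄ a) := by
  let e : PrimeMultiset → ℕ := fun v => (v.prod : ℕ)
  have he : Function.Injective e := by
    intro u v huv
    have : u.prod = v.prod := PNat.coe_injective huv
    exact PNat.factorMultisetEquiv.symm.injective this
  have hinf : ∀ u v, e (u ⊓ v) = (e u).gcd (e v) := by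
    intro u v; simp only [e]; rw [PrimeMultiset.prod_inf]; rfl
  have hsup : ∀ u v, e (u ⊔ v) = (e u).lcm (e v) := by
    intro u v; simp only [e]; rw [PrimeMultiset.prod_sup]; rfl
  let s : Finset PrimeMultiset := M.divisors.preimage e he.injOn
  have hs : s.image e = M.divisors := by
    ext d
    simp only [s, Finset.mem_image, Finset.mem_preimage]
    constructor
    · rintro ⟨v, hv, rfl⟩; exact hv
    · intro hd
      have hd0 : 0 < d := Nat.pos_of_mem_divisors hd
      have hed : e (PNat.factorMultiset (d.toPNat hd0)) = d := by
        simp only [e]; rw [PNat.prod_factorMultiset]; rfl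
      exact ⟨PNat.factorMultiset (d.toPNat hd0), by rw [hed]; exact hd, hed⟩
  have hsum : ∀ f : ℕ → ℝ, ∑ a ∈ M.divisors, f a = ∑ v ∈ s, f (e v) := by
    intro f; rw [← hs, Finset.sum_image he.injOn]
  have hsM : ∀ v, v ∈ s ↔ e v ∣ M := by
    intro v; simp [s, hM.ne']
  have hst : s ⊼ s ⊆ s := by
    intro v hv
    obtain ⟨a, ha, b, hb, rfl⟩ := Finset.mem_infs.1 hv
    rw [hsM] at ha ⊢; rw [hinf]; exact (Nat.gcd_dvd_left _ _).trans ha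
  have hst' : s ⊻ s ⊆ s := by
    intro v hv
    obtain ⟨a, ha, b, hb, rfl⟩ := Finset.mem_sups.1 hv
    rw [hsM] at ha hb ⊢; rw [hsup]; exact Nat.lcm_dvd ha hb
  have key := four_functions_theorem (f₁ ∘ e) (f₂ ∘ e) (f₃ ∘ e) (f₄ ∘ e) (fun _ => h₁ _)
    (fun _ => h₂ _) (fun _ => h₃ _) (fun _ => h₄ _)
    (fun a b => by simp only [Function.comp, hinf, hsup]; exact h _ _) s s
  simp only [hsum]
  refine key.trans ?_
  refine mul_le_mul ?_ ?_ (Finset.sum_nonneg fun _ _ => h₄ _) (Finset.sum_nonneg fun _ _ => h₃ _)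
  · exact Finset.sum_le_sum_of_subset_of_nonneg hst fun _ _ _ => h₃ _
  · exact Finset.sum_le_sum_of_subset_of_nonneg hst' fun _ _ _ => h₄ _

theorem totient_mul_totient_eq (a b : ℕ) :
    Nat.totient a * Nat.totient b = Nat.totient (a.gcd b) * Nat.totient (a.lcm b) := by
  rcases Nat.eq_zero_or_pos (a.gcd b) with h0 | hg
  · have := Nat.gcd_eq_zero_iff.1 h0
    simp [this.1, this.2]
  have h1 := Nat.totient_gcd_mul_totient_mul a b
  have hdvd : a.gcd b ∣ a.lcm b := (Nat.gcd_dvd_left a b).trans (Nat.dvd_lcm_left a b)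
  have h2 := Nat.totient_gcd_mul_totient_mul (a.gcd b) (a.lcm b)
  rw [Nat.gcd_eq_left hdvd, Nat.gcd_mul_lcm] at h2
  have hφ : 0 < Nat.totient (a.gcd b) := Nat.totient_pos.2 hg
  have h3 : Nat.totient (a * b) = Nat.totient (a.lcm b) * a.gcd b := by
    apply Nat.eq_of_mul_eq_mul_left hφ
    rw [h2]; ring
  rw [h3] at h1
  apply Nat.eq_of_mul_eq_mul_right hg
  rw [← h1]; ring

/-- The indicator of a set of integers, with real values. -/
def ind (S : Set ℤ) (x : ℤ) : ℝ := if x ∈ S then 1 else 0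

/-- The number of elements of `S` in the window `[t, t + M)`, as a real number. -/
def wc (S : Set ℤ) (t : ℤ) (M : ℕ) : ℝ := ∑ j ∈ Finset.range M, ind S (t + j)

/-- The logarithmically weighted count of the elements of `S` in `[1, N]`. -/
def T (S : Set ℤ) (N : ℕ) : ℝ := ∑ n ∈ Finset.Icc 1 N, ind S (n : ℤ) * (n : ℝ)⁻¹

/-- The harmonic number, as a real number. -/
def Hn (N : ℕ) : ℝ := ∑ n ∈ Finset.Icc 1 N, (n : ℝ)⁻¹

theorem ind_nonneg (S : Set ℤ) (x : ℤ) : 0 ≤ ind S x := by unfold ind; split_ifs <;> norm_num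
theorem ind_le_one (S : Set ℤ) (x : ℤ) : ind S x ≤ 1 := by unfold ind; split_ifs <;> norm_num
theorem ind_mono {S S' : Set ℤ} (h : S ⊆ S') (x : ℤ) : ind S x ≤ ind S' x := by
  unfold ind; split_ifs with h1 h2 <;> first | exact absurd (h h1) h2 | norm_num
theorem ind_of_mem {S : Set ℤ} {x : ℤ} (h : x ∈ S) : ind S x = 1 := if_pos h
theorem ind_of_notMem {S : Set ℤ} {x : ℤ} (h : x ∉ S) : ind S x = 0 := if_neg h

/-- Counting the multiples of `G` in `[0, M)` according to their greatest common divisor with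
`M`. -/
theorem wc_gcd (G : Finset ℕ) {M : ℕ} (hM : 0 < M) (hG : ∀ g ∈ G, g ∣ M) :
    ∑ d ∈ M.divisors, ind (MB G) (d : ℤ) * (Nat.totient (M / d) : ℝ) = wc (MB G) 0 M := by
  unfold wc
  have h1 : ∀ n ∈ Finset.range M, M.gcd n ∈ M.divisors := by
    intro n _; rw [Nat.mem_divisors]; exact ⟨Nat.gcd_dvd_left _ _, hM.ne'⟩
  rw [← Finset.sum_fiberwise_of_maps_to h1]
  refine Finset.sum_congr rfl fun d hd => ?_
  rw [Nat.totient_div_of_dvd (Nat.dvd_of_mem_divisors hd)]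
  rw [Finset.sum_congr rfl (g := fun _ => ind (MB G) (d : ℤ))]
  · rw [Finset.sum_const, nsmul_eq_mul, mul_comm]
  · intro n hn
    obtain ⟨-, hn⟩ := Finset.mem_filter.1 hn
    have : (n : ℤ) ∈ MB G ↔ (d : ℤ) ∈ MB G := by
      unfold MB
      refine exists_congr fun g => and_congr_right fun hg => ?_
      rw [← hn, Int.natCast_dvd_natCast, Int.natCast_dvd_natCast, Nat.dvd_gcd_iff]
      exact ⟨fun h => ⟨hG g hg, h⟩, fun h => h.2⟩
    unfold ind
    simp only [zero_add, this]

/-- For a finite set `G`, the proportion of multiples of `G` in `[1, N]`, counted with weights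
`1 / n`, does not exceed their density: this is the correlation inequality for the up-set of
multiples of `G` and the down-set `[1, N]` in the lattice of divisors of a large `M`. -/
theorem T_le_sq (G : Finset ℕ) (N L : ℕ) (hL : 0 < L) (hG : ∀ g ∈ G, g ∣ L)
    (hN : ∀ n ∈ Finset.Icc 1 N, n ∣ L) :
    T (MB G) N * ((L * L : ℕ) : ℝ) ≤ wc (MB G) 0 (L * L) * Hn N := by
  set M := L * L with hMdef
  have hM : 0 < M := Nat.mul_pos hL hL
  have hnM : ∀ n ∈ Finset.Icc 1 N, n ∣ M := fun n hn => (hN n hn).trans (Dvd.intro _ rfl)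
  -- the weight of a divisor `n ≤ N` of `M` is proportional to `1 / n`
  have hw : ∀ n ∈ Finset.Icc 1 N, (Nat.totient (M / n) : ℝ) = Nat.totient M * (n : ℝ)⁻¹ := by
    intro n hn
    have hn0 : 0 < n := (Finset.mem_Icc.1 hn).1
    have hdvd : n ∣ M / n := by
      obtain ⟨k, hk⟩ := hN n hn
      refine ⟨k * k, Nat.div_eq_of_eq_mul_left hn0 ?_⟩
      rw [hMdef, hk]; ring
    have h2 := Nat.totient_gcd_mul_totient_mul n (M / n)
    rw [Nat.gcd_eq_left hdvd, Nat.mul_div_cancel' (hnM n hn)] at h2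
    have hφ : 0 < Nat.totient n := Nat.totient_pos.2 hn0
    have h3 : Nat.totient M = Nat.totient (M / n) * n := by
      apply Nat.eq_of_mul_eq_mul_left hφ; rw [h2]; ring
    rw [h3]; push_cast
    field_simp
  have hsub : Finset.Icc 1 N ⊆ M.divisors := by
    intro n hn; rw [Nat.mem_divisors]; exact ⟨hnM n hn, hM.ne'⟩
  have key := four_functions_divisors
    (fun e => if M / e ≤ N ∧ e ∣ M then ind (MB G) (M / e : ℕ) * (Nat.totient e : ℝ) else 0)
    (fun e => if e ∣ M then (Nat.totient e : ℝ) else 0)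
    (fun e => ind (MB G) (M / e : ℕ) * (Nat.totient e : ℝ))
    (fun e => if M / e ≤ N ∧ e ∣ M then (Nat.totient e : ℝ) else 0)
    (fun a => by
      have := ind_nonneg (MB G) (M / a : ℕ)
      split_ifs <;> positivity)
    (fun a => by split_ifs <;> positivity)
    (fun a => by have := ind_nonneg (MB G) (M / a : ℕ); positivity)
    (fun a => by split_ifs <;> positivity)
    (fun a b => ?_) hM
  · have e1 : ∑ e ∈ M.divisors,
        (if M / e ≤ N ∧ e ∣ M then ind (MB G) (M / e : ℕ) * (Nat.totient e : ℝ) else 0)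
        = Nat.totient M * T (MB G) N := by
      rw [← Nat.sum_div_divisors]
      have : ∀ d ∈ M.divisors, (if M / (M / d) ≤ N ∧ (M / d) ∣ M then
          ind (MB G) (M / (M / d) : ℕ) * (Nat.totient (M / d) : ℝ) else 0) =
          if d ∈ Finset.Icc 1 N then ind (MB G) (d : ℤ) * (Nat.totient (M / d) : ℝ) else 0 := by
        intro d hd
        have hd' := Nat.dvd_of_mem_divisors hd
        rw [Nat.div_div_self hd' hM.ne']
        have hd1 : 1 ≤ d := Nat.pos_of_mem_divisors hd
        simp [Nat.div_dvd_of_dvd hd', hd1]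
      rw [Finset.sum_congr rfl this, ← Finset.sum_filter,
        Finset.filter_mem_eq_inter, Finset.inter_eq_right.2 hsub]
      unfold T
      rw [Finset.mul_sum]
      refine Finset.sum_congr rfl fun n hn => ?_
      rw [hw n hn]; ring
    have e2 : ∑ e ∈ M.divisors, (if M / e ≤ N ∧ e ∣ M then (Nat.totient e : ℝ) else 0)
        = Nat.totient M * Hn N := by
      rw [← Nat.sum_div_divisors]
      have : ∀ d ∈ M.divisors, (if M / (M / d) ≤ N ∧ (M / d) ∣ M then
          (Nat.totient (M / d) : ℝ) else 0) =
          if d ∈ Finset.Icc 1 N then (Nat.totient (M / d) : ℝ) else 0 := by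
        intro d hd
        have hd' := Nat.dvd_of_mem_divisors hd
        rw [Nat.div_div_self hd' hM.ne']
        have hd1 : 1 ≤ d := Nat.pos_of_mem_divisors hd
        simp [Nat.div_dvd_of_dvd hd', hd1]
      rw [Finset.sum_congr rfl this, ← Finset.sum_filter,
        Finset.filter_mem_eq_inter, Finset.inter_eq_right.2 hsub]
      unfold Hn
      rw [Finset.mul_sum]
      exact Finset.sum_congr rfl fun n hn => hw n hn
    have e3 : ∑ e ∈ M.divisors, (if e ∣ M then (Nat.totient e : ℝ) else 0) = M := by
      rw [Finset.sum_congr rfl (g := fun e => (Nat.totient e : ℝ))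
        (fun e he => if_pos (Nat.dvd_of_mem_divisors he))]
      exact_mod_cast Nat.sum_totient M
    have e4 : ∑ e ∈ M.divisors, ind (MB G) (M / e : ℕ) * (Nat.totient e : ℝ) = wc (MB G) 0 M := by
      rw [← Nat.sum_div_divisors, ← wc_gcd G hM fun g hg => (hG g hg).trans (Dvd.intro _ rfl)]
      refine Finset.sum_congr rfl fun d hd => ?_
      rw [Nat.div_div_self (Nat.dvd_of_mem_divisors hd) hM.ne']
    rw [e1, e2, e3, e4] at key
    have hφ : (0 : ℝ) < Nat.totient M := by exact_mod_cast Nat.totient_pos.2 hM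
    have : (Nat.totient M : ℝ) * (T (MB G) N * M) ≤ Nat.totient M * (wc (MB G) 0 M * Hn N) := by
      linarith
    exact le_of_mul_le_mul_left this hφ
  · have hnn := ind_nonneg (MB G) (M / (a.gcd b) : ℕ)
    have hnn' : (0 : ℝ) ≤ if M / (a.lcm b) ≤ N ∧ (a.lcm b) ∣ M then
      (Nat.totient (a.lcm b) : ℝ) else 0 := by split_ifs <;> positivity
    by_cases ha : M / a ≤ N ∧ a ∣ M
    swap
    · rw [if_neg ha, zero_mul]; positivity
    by_cases hb : b ∣ M
    swap
    · rw [if_neg hb, mul_zero]; positivity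
    have hl : a.lcm b ∣ M := Nat.lcm_dvd ha.2 hb
    have ha0 : 0 < a := Nat.pos_of_dvd_of_pos ha.2 hM
    have hg0 : 0 < a.gcd b := Nat.gcd_pos_of_pos_left _ ha0
    have hl2 : M / a.lcm b ≤ N :=
      (Nat.div_le_div_left (Nat.le_of_dvd (Nat.pos_of_dvd_of_pos hl hM) (Nat.dvd_lcm_left a b))
        ha0).trans ha.1
    rw [if_pos ha, if_pos hb, if_pos ⟨hl2, hl⟩]
    have hmul : ((Nat.totient a : ℝ) * Nat.totient b) =
        Nat.totient (a.gcd b) * Nat.totient (a.lcm b) := by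
      exact_mod_cast totient_mul_totient_eq a b
    have hind : ind (MB G) (M / a : ℕ) ≤ ind (MB G) (M / a.gcd b : ℕ) := by
      by_cases hm : ((M / a : ℕ) : ℤ) ∈ MB G
      · obtain ⟨g, hg, hgd⟩ := hm
        rw [ind_of_mem (S := MB G) (x := (M / a.gcd b : ℕ)) ⟨g, hg, ?_⟩]
        · exact ind_le_one _ _
        · refine hgd.trans ?_
          rw [Int.natCast_dvd_natCast]
          exact Nat.div_dvd_div_left ha.2 (Nat.gcd_dvd_left a b)
      · rw [ind_of_notMem hm]; exact hnn
    calc ind (MB G) (M / a : ℕ) * (Nat.totient a : ℝ) * Nat.totient b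
        = ind (MB G) (M / a : ℕ) * (Nat.totient (a.gcd b) * Nat.totient (a.lcm b)) := by
          rw [mul_assoc, hmul]
      _ ≤ ind (MB G) (M / a.gcd b : ℕ) * (Nat.totient (a.gcd b) * Nat.totient (a.lcm b)) := by
          gcongr
      _ = _ := by ring

/-! ### Banach density, logarithmic density and Behrend sets -/

theorem wc_mono {S S' : Set ℤ} (h : S ⊆ S') (t : ℤ) (M : ℕ) : wc S t M ≤ wc S' t M :=
  Finset.sum_le_sum fun _ _ => ind_mono h _

theorem wc_nonneg (S : Set ℤ) (t : ℤ) (M : ℕ) : 0 ≤ wc S t M :=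
  Finset.sum_nonneg fun _ _ => ind_nonneg _ _

theorem wc_add (S : Set ℤ) (t : ℤ) (M M' : ℕ) :
    wc S t (M + M') = wc S t M + wc S (t + M) M' := by
  unfold wc
  rw [Finset.sum_range_add]
  congr 1
  refine Finset.sum_congr rfl fun j _ => ?_
  push_cast; rw [add_assoc]

theorem wc_mul_le {S : Set ℤ} {M : ℕ} {c : ℝ} (h : ∀ t, wc S t M ≤ c) (k : ℕ) (t : ℤ) :
    wc S t (k * M) ≤ k * c := by
  induction k generalizing t with
  | zero => simp [wc]
  | succ k ih =>
    rw [Nat.succ_mul, wc_add]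
    push_cast
    linarith [ih t, h (t + k * M)]

theorem wc_le_mul {S : Set ℤ} {M : ℕ} {c : ℝ} (h : ∀ t, c ≤ wc S t M) (k : ℕ) (t : ℤ) :
    k * c ≤ wc S t (k * M) := by
  induction k generalizing t with
  | zero => simp [wc]
  | succ k ih =>
    rw [Nat.succ_mul, wc_add]
    push_cast
    linarith [ih t, h (t + k * M)]

theorem ind_compl (S : Set ℤ) (x : ℤ) : ind S x + ind Sᶜ x = 1 := by
  unfold ind; by_cases h : x ∈ S <;> simp [h]

theorem wc_compl (S : Set ℤ) (t : ℤ) (M : ℕ) : wc S t M + wc Sᶜ t M = M := by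
  unfold wc
  rw [← Finset.sum_add_distrib]
  simp [ind_compl]

theorem wc_union (S S' : Set ℤ) (t : ℤ) (M : ℕ) : wc (S ∪ S') t M ≤ wc S t M + wc S' t M := by
  unfold wc
  rw [← Finset.sum_add_distrib]
  refine Finset.sum_le_sum fun j _ => ?_
  unfold ind
  by_cases h : t + (j : ℤ) ∈ S <;> by_cases h' : t + (j : ℤ) ∈ S' <;> simp [h, h']

/-- `BSmall S ε` says that the upper Banach density of `S` is at most `ε`, in the finitary form that
all windows of some fixed length have at most a proportion `ε` of their points in `S`. -/
def BSmall (S : Set ℤ) (ε : ℝ) : Prop := ∃ M : ℕ, 0 < M ∧ ∀ t, wc S t M ≤ ε * M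

theorem BSmall.mono {S S' : Set ℤ} {ε ε' : ℝ} (h : BSmall S ε) (hS : S' ⊆ S) (hε : ε ≤ ε') :
    BSmall S' ε' := by
  obtain ⟨M, hM, h⟩ := h
  refine ⟨M, hM, fun t => (wc_mono hS t M).trans ((h t).trans ?_)⟩
  gcongr

theorem BSmall.union {S S' : Set ℤ} {ε ε' : ℝ} (h : BSmall S ε) (h' : BSmall S' ε') :
    BSmall (S ∪ S') (ε + ε') := by
  obtain ⟨M, hM, h⟩ := h
  obtain ⟨M', hM', h'⟩ := h'
  refine ⟨M' * M, Nat.mul_pos hM' hM, fun t => (wc_union _ _ _ _).trans ?_⟩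
  have h1 := wc_mul_le h M' t
  have h2 := wc_mul_le h' M t
  rw [mul_comm M M'] at h2
  push_cast
  nlinarith

theorem BSmall.empty : BSmall ∅ 0 := ⟨1, one_pos, fun t => by simp [wc, ind]⟩

theorem BSmall.biUnion {ι : Type*} (I : Finset ι) (S : ι → Set ℤ) (ε : ι → ℝ)
    (h : ∀ i ∈ I, BSmall (S i) (ε i)) : BSmall (⋃ i ∈ I, S i) (∑ i ∈ I, ε i) := by
  induction I using Finset.induction_on with
  | empty => simpa using BSmall.empty
  | insert a I ha ih =>
    rw [Finset.set_biUnion_insert, Finset.sum_insert ha]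
    exact (h a (Finset.mem_insert_self _ _)).union
      (ih fun i hi => h i (Finset.mem_insert_of_mem hi))

theorem wc_translate (S : Set ℤ) (i t : ℤ) (M : ℕ) :
    wc {m | m + i ∈ S} t M = wc S (t + i) M := by
  unfold wc
  refine Finset.sum_congr rfl fun j _ => ?_
  unfold ind
  simp only [Set.mem_ofPred_eq, add_right_comm]

theorem BSmall.translate {S : Set ℤ} {ε : ℝ} (h : BSmall S ε) (i : ℤ) :
    BSmall {m | m + i ∈ S} ε := by
  obtain ⟨M, hM, h⟩ := h
  exact ⟨M, hM, fun t => by rw [wc_translate]; exact h _⟩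

/-- `S` is a union of residue classes modulo `M`. -/
def PerSet (S : Set ℤ) (M : ℕ) : Prop := ∀ x : ℤ, x + M ∈ S ↔ x ∈ S

theorem PerSet.mul {S : Set ℤ} {M : ℕ} (h : PerSet S M) (k : ℤ) (x : ℤ) :
    x + k * M ∈ S ↔ x ∈ S := by
  induction k using Int.induction_on with
  | zero => simp
  | succ k ih => rw [← ih, ← h (x + k * M)]; ring_nf
  | pred k ih => rw [← ih, ← h]; ring_nf

theorem PerSet.of_dvd {S : Set ℤ} {M M' : ℕ} (h : PerSet S M) (hM : M ∣ M') : PerSet S M' := by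
  obtain ⟨k, rfl⟩ := hM
  intro x
  rw [← h.mul k x]; push_cast; ring_nf

theorem PerSet.compl {S : Set ℤ} {M : ℕ} (h : PerSet S M) : PerSet Sᶜ M :=
  fun x => not_congr (h x)

theorem PerSet.inter {S S' : Set ℤ} {M : ℕ} (h : PerSet S M) (h' : PerSet S' M) :
    PerSet (S ∩ S') M := fun x => and_congr (h x) (h' x)

theorem PerSet.ind {S : Set ℤ} {M : ℕ} (h : PerSet S M) (x : ℤ) : ind S (x + M) = ind S x := by
  unfold BFree.ind; simp only [h x]

theorem PerSet.wc_eq {S : Set ℤ} {M : ℕ} (h : PerSet S M) (t : ℤ) : wc S t M = wc S 0 M := by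
  have step : ∀ t, wc S (t + 1) M = wc S t M := by
    intro t
    have h1 := wc_add S t 1 M
    have h2 := wc_add S t M 1
    rw [add_comm 1 M] at h1
    have h3 : wc S t 1 = wc S (t + M) 1 := by simp [wc, h.ind]
    push_cast at h1
    linarith
  induction t using Int.induction_on with
  | zero => rfl
  | succ k ih => rw [step, ih]
  | pred k ih => rw [← ih, ← step]; congr 1; ring

theorem PerSet.wc_mul {S : Set ℤ} {M : ℕ} (h : PerSet S M) (k : ℕ) (t : ℤ) :
    wc S t (k * M) = k * wc S 0 M :=
  le_antisymm (wc_mul_le (fun t => (h.wc_eq t).le) k t) (wc_le_mul (fun t => (h.wc_eq t).ge) k t)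

theorem perSet_MB {A : Set ℕ} {M : ℕ} (h : ∀ a ∈ A, a ∣ M) : PerSet (MB A) M := by
  intro x
  refine exists_congr fun a => and_congr_right fun ha => ?_
  exact (Int.dvd_add_left (Int.natCast_dvd_natCast.2 (h a ha)))

/-- Shifting a set by one changes its logarithmic counts by at most one. -/
theorem T_succ (S : Set ℤ) (N : ℕ) :
    T {x | x + 1 ∈ S} N ≤ T S N + 1 ∧ T S N ≤ T {x | x + 1 ∈ S} N + 1 := by
  have e : ∀ n : ℕ, ind {x | x + 1 ∈ S} n = ind S ((n + 1 : ℕ) : ℤ) := by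
    intro n; unfold ind; simp
  have hs : ∀ (S : Set ℤ) (N : ℕ), T S (N + 1) = T S N + ind S ((N + 1 : ℕ) : ℤ) * ((N + 1 : ℕ) : ℝ)⁻¹ := by
    intro S N; unfold T; rw [Finset.sum_Icc_succ_top (by omega)]
  have h0 : ∀ S : Set ℤ, T S 0 = 0 := by intro S; simp [T]
  have inv : ∀ N : ℕ, ((N + 2 : ℕ) : ℝ)⁻¹ ≤ ((N + 1 : ℕ) : ℝ)⁻¹ := by
    intro N; apply inv_anti₀ <;> norm_cast <;> omega
  have key : T {x | x + 1 ∈ S} N ≤ T S N + ind S ((N + 1 : ℕ) : ℤ) * ((N + 1 : ℕ) : ℝ)⁻¹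
        + (1 - ((N + 1 : ℕ) : ℝ)⁻¹) ∧
      T S N + ind S ((N + 1 : ℕ) : ℤ) * ((N + 1 : ℕ) : ℝ)⁻¹ ≤ T {x | x + 1 ∈ S} N + 1 := by
    induction N with
    | zero =>
      simp only [h0]
      have := ind_nonneg S ((0 + 1 : ℕ) : ℤ)
      have := ind_le_one S ((0 + 1 : ℕ) : ℤ)
      constructor <;> norm_num at * <;> assumption
    | succ N ih =>
      have h1 := ind_nonneg S ((N + 1 + 1 : ℕ) : ℤ)
      have h2 := ind_le_one S ((N + 1 + 1 : ℕ) : ℤ)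
      have h3 := inv N
      have h4 : N + 2 = N + 1 + 1 := rfl
      rw [hs, hs, e (N + 1)]
      rw [h4] at h3
      generalize ind S ((N + 1 + 1 : ℕ) : ℤ) = f at *
      generalize ((N + 1 + 1 : ℕ) : ℝ)⁻¹ = a at *
      generalize ((N + 1 : ℕ) : ℝ)⁻¹ = b at *
      obtain ⟨i1, i2⟩ := ih
      constructor <;> nlinarith
  have h1 := ind_nonneg S ((N + 1 : ℕ) : ℤ)
  have h2 := ind_le_one S ((N + 1 : ℕ) : ℤ)
  have h3 : (0 : ℝ) ≤ ((N + 1 : ℕ) : ℝ)⁻¹ := by positivity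
  constructor <;> nlinarith [key.1, key.2]

theorem T_shift (S : Set ℤ) (N j : ℕ) :
    T {x | x + j ∈ S} N ≤ T S N + j ∧ T S N ≤ T {x | x + j ∈ S} N + j := by
  induction j with
  | zero => simp
  | succ j ih =>
    have h := T_succ {x | x + j ∈ S} N
    have e : {x : ℤ | x + 1 ∈ {x : ℤ | x + j ∈ S}} = {x : ℤ | x + ((j + 1 : ℕ) : ℤ) ∈ S} := by
      ext x; simp only [Set.mem_ofPred_eq]; push_cast; ring_nf
    rw [e] at h
    push_cast at h ⊢
    constructor <;> linarith [h.1, h.2, ih.1, ih.2]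

theorem sum_T_shift (S : Set ℤ) (N M : ℕ) :
    ∑ j ∈ Finset.range M, T {x | x + j ∈ S} N = ∑ n ∈ Finset.Icc 1 N, wc S n M * (n : ℝ)⁻¹ := by
  unfold T wc
  rw [Finset.sum_comm]
  refine Finset.sum_congr rfl fun n _ => ?_
  rw [Finset.sum_mul]
  rfl

/-- A bound on all windows of length `M` bounds the logarithmic counts, by averaging over shifts. -/
theorem T_le_of_wc {S : Set ℤ} {M : ℕ} {c : ℝ} (h : ∀ t, wc S t M ≤ c) (N : ℕ) :
    M * T S N ≤ c * Hn N + M * M := by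
  have h1 : ∑ j ∈ Finset.range M, T {x | x + j ∈ S} N ≤ c * Hn N := by
    rw [sum_T_shift, Hn, Finset.mul_sum]
    exact Finset.sum_le_sum fun n _ => by gcongr; exact h _
  have h2 : ∑ j ∈ Finset.range M, T S N ≤ ∑ j ∈ Finset.range M, (T {x | x + j ∈ S} N + M) :=
    Finset.sum_le_sum fun j hj => ((T_shift S N j).2).trans (by
      have : (j : ℝ) ≤ M := by exact_mod_cast (Finset.mem_range.1 hj).le
      linarith)
  rw [Finset.sum_add_distrib] at h2
  simp only [Finset.sum_const, Finset.card_range, nsmul_eq_mul] at h2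
  linarith

theorem T_ge_of_wc {S : Set ℤ} {M : ℕ} {c : ℝ} (h : ∀ t, c ≤ wc S t M) (N : ℕ) :
    c * Hn N ≤ M * T S N + M * M := by
  have h1 : c * Hn N ≤ ∑ j ∈ Finset.range M, T {x | x + j ∈ S} N := by
    rw [sum_T_shift, Hn, Finset.mul_sum]
    exact Finset.sum_le_sum fun n _ => by gcongr; exact h _
  have h2 : ∑ j ∈ Finset.range M, T {x | x + j ∈ S} N ≤ ∑ j ∈ Finset.range M, (T S N + M) :=
    Finset.sum_le_sum fun j hj => ((T_shift S N j).1).trans (by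
      have : (j : ℝ) ≤ M := by exact_mod_cast (Finset.mem_range.1 hj).le
      linarith)
  rw [Finset.sum_add_distrib] at h2
  simp only [Finset.sum_const, Finset.card_range, nsmul_eq_mul] at h2
  linarith

theorem Hn_eq (N : ℕ) : Hn N = (harmonic N : ℝ) := by
  rw [harmonic_eq_sum_Icc, Hn]; push_cast; rfl

theorem Hn_le (N : ℕ) : Hn N ≤ 1 + Real.log N := by rw [Hn_eq]; exact harmonic_le_one_add_log N

theorem le_Hn (N : ℕ) : Real.log ((N + 1 : ℕ) : ℝ) ≤ Hn N := by
  rw [Hn_eq]; exact log_add_one_le_harmonic N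

theorem tendsto_log : Tendsto (fun N : ℕ => Real.log N) atTop atTop :=
  Real.tendsto_log_atTop.comp tendsto_natCast_atTop_atTop

theorem tendsto_Hn : Tendsto Hn atTop atTop :=
  tendsto_atTop_mono le_Hn (tendsto_log.comp (tendsto_add_atTop_nat 1))

theorem tendsto_Hn_div_log : Tendsto (fun N : ℕ => Hn N / Real.log N) atTop (𝓝 1) := by
  have h1 : Tendsto (fun N : ℕ => (1 : ℝ) / Real.log N + 1) atTop (𝓝 (0 + 1)) :=
    (tendsto_log.const_div_atTop 1).add_const 1
  rw [zero_add] at h1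
  refine tendsto_of_tendsto_of_tendsto_of_le_of_le' tendsto_const_nhds h1 ?_ ?_
  · filter_upwards [tendsto_log.eventually_gt_atTop 0, eventually_gt_atTop 0] with N hN h0
    rw [le_div_iff₀ hN, one_mul]
    refine le_trans ?_ (le_Hn N)
    apply Real.log_le_log (by exact_mod_cast h0)
    push_cast; linarith
  · filter_upwards [tendsto_log.eventually_gt_atTop 0] with N hN
    rw [div_add_one hN.ne']
    gcongr
    exact Hn_le N

theorem logDensity_iff (A : Set ℤ) (d : ℝ) :
    logDensity A d ↔ Tendsto (fun N : ℕ => T A N / Real.log N) atTop (𝓝 d) := by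
  unfold logDensity
  have : ∀ L : ℕ, (∑ n ∈ Finset.Icc (1:ℤ) (L:ℤ), if n ∈ A then (n:ℝ)⁻¹ else 0) = T A L := by
    intro L
    unfold T
    symm
    refine Finset.sum_bij (fun n _ => (n : ℤ)) ?_ ?_ ?_ ?_
    · intro n hn; rw [Finset.mem_Icc] at *; omega
    · intro a _ b _ h; exact_mod_cast h
    · intro b hb
      rw [Finset.mem_Icc] at hb
      refine ⟨b.toNat, ?_, ?_⟩
      · rw [Finset.mem_Icc]; omega
      · omega
    · intro n _; unfold ind; split_ifs <;> simp
  simp only [this]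

theorem T_compl (S : Set ℤ) (N : ℕ) : T S N + T Sᶜ N = Hn N := by
  unfold T Hn
  rw [← Finset.sum_add_distrib]
  refine Finset.sum_congr rfl fun n _ => ?_
  rw [← add_mul, ind_compl, one_mul]

theorem T_mono {S S' : Set ℤ} (h : S ⊆ S') (N : ℕ) : T S N ≤ T S' N :=
  Finset.sum_le_sum fun n _ => by gcongr; exact ind_mono h _

theorem T_nonneg (S : Set ℤ) (N : ℕ) : 0 ≤ T S N :=
  Finset.sum_nonneg fun n _ => by have := ind_nonneg S n; positivity

theorem compl_MB (A : Set ℕ) : (MB A)ᶜ = FB A := rfl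

theorem MB_mono {A A' : Set ℕ} (h : A ⊆ A') : MB A ⊆ MB A' :=
  fun _ ⟨a, ha, hd⟩ => ⟨a, h ha, hd⟩

theorem FB_anti {A A' : Set ℕ} (h : A ⊆ A') : FB A' ⊆ FB A :=
  fun _ hx hx' => hx (MB_mono h hx')

/-- The Behrend bound: a finite set of multiples is logarithmically at most as frequent in `[1, N]`
as its density. -/
theorem T_le_dens (G : Finset ℕ) {M : ℕ} (hM : 0 < M) (hG : ∀ g ∈ G, g ∣ M) (N : ℕ) :
    T (MB G) N * M ≤ wc (MB G) 0 M * Hn N := by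
  set L := M * N.factorial with hL
  have hL0 : 0 < L := Nat.mul_pos hM (Nat.factorial_pos _)
  have h := T_le_sq G N L hL0 (fun g hg => (hG g hg).trans (Dvd.intro _ rfl)) (fun n hn => by
    rw [Finset.mem_Icc] at hn
    exact (Nat.dvd_factorial (by omega) hn.2).trans (Dvd.intro_left _ rfl))
  have hp : PerSet (MB G) M := perSet_MB (fun a ha => hG a ha)
  have e : L * L = (N.factorial * L) * M := by rw [hL]; ring
  rw [e, hp.wc_mul] at h
  have hk : (0 : ℝ) < ((N.factorial * L : ℕ) : ℝ) := by
    exact_mod_cast Nat.mul_pos (Nat.factorial_pos _) hL0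
  refine le_of_mul_le_mul_left ?_ hk
  push_cast at h ⊢
  linarith

/-- In `[1, N]` only the elements of `A` up to `N` matter. -/
theorem T_MB_trunc (A : Set ℕ) (N : ℕ) :
    T (MB A) N = T (MB ((Finset.Icc 1 N).filter (· ∈ A) : Finset ℕ)) N := by
  unfold T
  refine Finset.sum_congr rfl fun n hn => ?_
  rw [Finset.mem_Icc] at hn
  have : (n : ℤ) ∈ MB A ↔ (n : ℤ) ∈ MB ((Finset.Icc 1 N).filter (· ∈ A) : Finset ℕ) := by
    refine exists_congr fun a => ?_
    rw [Int.natCast_dvd_natCast]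
    constructor
    · rintro ⟨ha, hd⟩
      have := Nat.le_of_dvd (by omega) hd
      have := Nat.pos_of_dvd_of_pos hd (by omega)
      refine ⟨?_, hd⟩
      simp only [Finset.coe_filter, Finset.mem_Icc, Set.mem_ofPred_eq]
      exact ⟨⟨by omega, by omega⟩, ha⟩
    · rintro ⟨ha, hd⟩
      simp only [Finset.coe_filter, Set.mem_ofPred_eq] at ha
      exact ⟨ha.2, hd⟩
  unfold ind
  simp only [this]

/-- For a Behrend set `A`, the `A`-free numbers have Banach density zero, already up to `ε` for a
finite subset of `A`: logarithmic density one up to a single large `N` suffices, by `T_le_dens`. -/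
theorem Behrend.exists_finset {A : Set ℕ} (hA : Behrend A) {ε : ℝ} (hε : 0 < ε) :
    ∃ G : Finset ℕ, ↑G ⊆ A ∧ BSmall (FB G) ε := by
  have h1 := (logDensity_iff _ _).1 hA.2
  have h2 := h1.div tendsto_Hn_div_log one_ne_zero
  rw [div_one] at h2
  have h3 := (h2.eventually (lt_mem_nhds (show 1 - ε < 1 by linarith))).and
    ((tendsto_log.eventually_gt_atTop 0).and (tendsto_Hn.eventually_gt_atTop 0))
  obtain ⟨N, hN, hlog, hH⟩ := h3.exists
  rw [Pi.div_apply, div_div_div_cancel_right₀ hlog.ne', lt_div_iff₀ hH, T_MB_trunc] at hN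
  set G : Finset ℕ := (Finset.Icc 1 N).filter (· ∈ A)
  have hG : ∀ g ∈ G, g ∣ N.factorial := by
    intro g hg
    have := Finset.mem_Icc.1 (Finset.mem_filter.1 hg).1
    exact Nat.dvd_factorial (by omega) this.2
  have hM := Nat.factorial_pos N
  refine ⟨G, fun g hg => (Finset.mem_filter.1 hg).2, N.factorial, hM, fun t => ?_⟩
  have h4 := T_le_dens G hM hG N
  have hp : PerSet (MB G) N.factorial := perSet_MB (fun a ha => hG a ha)
  have h5 := wc_compl (MB G) t N.factorial
  rw [hp.wc_eq] at h5
  rw [← compl_MB]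
  have hM' : (0 : ℝ) < N.factorial := by exact_mod_cast hM
  have h6 : (1 - ε) * N.factorial ≤ wc (MB G) 0 N.factorial := by
    refine le_of_mul_le_mul_right ?_ hH
    nlinarith
  linarith

/-- Converse of `Behrend.exists_finset`: Banach density zero implies logarithmic density zero. -/
theorem behrend_of_small {A : Set ℕ} (hA : ∀ a ∈ A, 0 < a) (h : ∀ ε > 0, BSmall (FB A) ε) :
    Behrend A := by
  refine ⟨hA, (logDensity_iff _ _).2 ?_⟩
  have h0 : Tendsto (fun N : ℕ => T (FB A) N / Real.log N) atTop (𝓝 0) := by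
    rw [Metric.tendsto_atTop']
    intro ε hε
    obtain ⟨M, hM, hs⟩ := h (ε / 2) (by positivity)
    have hM' : (0 : ℝ) < M := by exact_mod_cast hM
    have hb : ∀ N, T (FB A) N ≤ ε / 2 * (1 + Real.log N) + M := by
      intro N
      have h1 := T_le_of_wc hs N
      have h2 : T (FB A) N ≤ ε / 2 * Hn N + M := by
        refine le_of_mul_le_mul_left ?_ hM'
        linarith
      have := Hn_le N
      nlinarith
    obtain ⟨N0, hN0⟩ := eventually_atTop.1 ((tendsto_log.eventually_gt_atTop
      (max 0 ((ε / 2 + M) / (ε / 2)))))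
    refine ⟨N0, fun N hN => ?_⟩
    have hl := hN0 N hN.le
    have hl0 : 0 < Real.log N := (le_max_left _ _).trans_lt hl
    have hl1 := (le_max_right _ _).trans_lt hl
    rw [div_lt_iff₀ (by positivity)] at hl1
    rw [Real.dist_eq, sub_zero, abs_of_nonneg (div_nonneg (T_nonneg _ _) hl0.le),
      div_lt_iff₀ hl0]
    linarith [hb N]
  have h1 := tendsto_Hn_div_log.sub h0
  rw [sub_zero] at h1
  refine h1.congr fun N => ?_
  rw [← sub_div]
  congr 1
  have := T_compl (MB A) N
  rw [compl_MB] at this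
  linarith

/-! ### Tautification -/

theorem wc_card (S : Set ℤ) (t : ℤ) (M : ℕ) :
    wc S t M = (((Finset.Ico t (t + M)).filter (· ∈ S)).card : ℝ) := by
  rw [Finset.card_filter]
  push_cast
  unfold wc
  refine Finset.sum_bij (fun j _ => t + (j : ℤ)) ?_ ?_ ?_ ?_
  · intro j hj
    rw [Finset.mem_range] at hj
    rw [Finset.mem_Ico]; omega
  · intro a _ b _ h; omega
  · intro x hx
    rw [Finset.mem_Ico] at hx
    exact ⟨(x - t).toNat, by rw [Finset.mem_range]; omega, by omega⟩
  · intro j _; rfl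

/-- Dilation by `a` does not increase Banach density: a window of length `M` meets `a * S` at most as
often as some window of length `M` meets `S`. -/
theorem BSmall.dilate {S : Set ℤ} {ε : ℝ} (h : BSmall S ε) {a : ℕ} (ha : 0 < a) :
    BSmall {x | ∃ y ∈ S, x = a * y} ε := by
  obtain ⟨M, hM, h⟩ := h
  refine ⟨M, hM, fun t => ?_⟩
  set u : ℤ := -((-t) / a) with hu
  have ha' : (0 : ℤ) < a := by exact_mod_cast ha
  have hu1 : t ≤ a * u := by
    have := Int.mul_ediv_self_le (x := -t) (k := a) ha'.ne'
    rw [hu]; nlinarith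
  have hu2 : ∀ y : ℤ, t ≤ a * y → u ≤ y := by
    intro y hy
    have : -y ≤ (-t) / a := by rw [Int.le_ediv_iff_mul_le ha']; nlinarith
    omega
  refine le_trans ?_ (h u)
  rw [wc_card, wc_card]
  norm_cast
  apply Finset.card_le_card_of_injOn (fun x : ℤ => x / (a : ℤ))
  · intro x hx
    simp only [Finset.coe_filter, Finset.mem_Ico, Set.mem_ofPred_eq] at hx ⊢
    obtain ⟨⟨h1, h2⟩, y, hy, rfl⟩ := hx
    rw [Int.mul_ediv_cancel_left _ ha'.ne']
    have := hu2 y h1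
    refine ⟨⟨this, ?_⟩, hy⟩
    nlinarith
  · intro x hx x' hx' hxx
    simp only [Finset.coe_filter, Finset.mem_Ico, Set.mem_ofPred_eq] at hx hx'
    obtain ⟨_, y, hy, rfl⟩ := hx
    obtain ⟨_, y', hy', rfl⟩ := hx'
    simp only [Int.mul_ediv_cancel_left _ ha'.ne'] at hxx
    rw [hxx]

theorem perSet_AP (r : ℤ) (Q : ℕ) : PerSet {x : ℤ | (Q : ℤ) ∣ x - r} Q := by
  intro x
  simp only [Set.mem_ofPred_eq]
  rw [add_sub_right_comm, Int.dvd_add_left dvd_rfl]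

theorem wc_AP (r t : ℤ) {Q : ℕ} (hQ : 0 < Q) : wc {x : ℤ | (Q : ℤ) ∣ x - r} t Q = 1 := by
  rw [(perSet_AP r Q).wc_eq, ← (perSet_AP r Q).wc_eq r]
  unfold wc
  rw [Finset.sum_eq_single 0]
  · apply ind_of_mem; simp
  · intro j hj hj0
    apply ind_of_notMem
    simp only [Set.mem_ofPred_eq, add_sub_cancel_left]
    rw [Int.natCast_dvd_natCast]
    intro hd
    rw [Finset.mem_range] at hj
    exact absurd (Nat.le_of_dvd (by omega) hd) (by omega)
  · intro h; simp at h; omega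

/-- A set that is small at all scales contains no complete residue class. -/
theorem not_AP_subset {S : Set ℤ} (h : ∀ ε > 0, BSmall S ε) (r : ℤ) {Q : ℕ} (hQ : 0 < Q) :
    ¬ {x : ℤ | (Q : ℤ) ∣ x - r} ⊆ S := by
  intro hsub
  have hQ' : (0 : ℝ) < Q := by exact_mod_cast hQ
  obtain ⟨M, hM, hs⟩ := h (1 / (2 * Q)) (by positivity)
  have hM' : (0 : ℝ) < M := by exact_mod_cast hM
  have h1 := wc_mul_le hs Q 0
  have h2 := (perSet_AP r Q).wc_mul M 0
  rw [wc_AP _ _ hQ, mul_comm M Q] at h2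
  have h3 := wc_mono hsub 0 (Q * M)
  have : (Q : ℝ) * (1 / (2 * Q) * M) = M / 2 := by field_simp
  linarith

theorem exists_dvd_primPart {S : Set ℕ} {s : ℕ} (hs : s ∈ S) (h0 : 0 ∉ S) :
    ∃ b ∈ primPart S, b ∣ s := by
  induction s using Nat.strong_induction_on with
  | _ s ih =>
    by_cases h : s ∈ primPart S
    · exact ⟨s, h, dvd_rfl⟩
    · unfold primPart at h
      simp only [Set.mem_ofPred_eq, not_and, not_forall] at h
      obtain ⟨b, hb, hd, hne⟩ := h hs
      have h0s : 0 < s := Nat.pos_of_ne_zero fun h => h0 (h ▸ hs)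
      obtain ⟨c, hc, hcb⟩ := ih b (lt_of_le_of_ne (Nat.le_of_dvd h0s hd) hne) hb
      exact ⟨c, hc, hcb.trans hd⟩

theorem MB_primPart {S : Set ℕ} (h0 : 0 ∉ S) : MB (primPart S) = MB S := by
  apply Set.Subset.antisymm (MB_mono fun b hb => hb.1)
  rintro x ⟨s, hs, hx⟩
  obtain ⟨b, hb, hbs⟩ := exists_dvd_primPart hs h0
  exact ⟨b, hb, (Int.natCast_dvd_natCast.2 hbs).trans hx⟩

theorem Behrend.small {A : Set ℕ} (hA : Behrend A) {ε : ℝ} (hε : 0 < ε) : BSmall (FB A) ε := by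
  obtain ⟨G, hG, hs⟩ := hA.exists_finset hε
  exact hs.mono (FB_anti hG) le_rfl

/-- The set of `d` such that `d * a ∈ B` for `a` coprime to any prescribed modulus. It contains
both `Cset B` and `Dset B`. -/
def Dt (B : Set ℕ) : Set ℕ := {d | ∀ Q > 0, ∃ a > 0, Nat.Coprime a Q ∧ d * a ∈ B}

theorem Cset_subset_Dt (B : Set ℕ) : Cset B ⊆ Dt B := by
  rintro c ⟨A, hA, hc⟩ Q hQ
  by_contra! hcon
  refine not_AP_subset (fun ε hε => hA.small hε) 1 hQ ?_
  rintro x hx ⟨a, ha, hax⟩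
  refine hcon a (hA.1 a ha) ?_ (hc a ha)
  rw [← Nat.isCoprime_iff_coprime]
  obtain ⟨k, hk⟩ := hx
  obtain ⟨l, hl⟩ := hax
  refine ⟨l, -k, ?_⟩
  have : x = 1 + Q * k := by linarith
  linarith

theorem Dset_subset_Dt (B : Set ℕ) : Dset B ⊆ Dt B := by
  rintro d ⟨A, hinf, hpos, hcop, hd⟩ Q hQ
  by_contra! hcon
  have hne : ∀ a ∈ A, Nat.gcd a Q ≠ 1 := fun a ha h => hcon a (hpos a ha) h (hd a ha)
  apply hinf
  refine Set.Finite.of_finite_image (f := fun a => (Nat.gcd a Q).minFac) ?_ ?_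
  · refine (Q.primeFactors.finite_toSet).subset ?_
    rintro _ ⟨a, ha, rfl⟩
    simp only [Finset.mem_coe, Nat.mem_primeFactors]
    exact ⟨Nat.minFac_prime (hne a ha), (Nat.minFac_dvd _).trans (Nat.gcd_dvd_right _ _), hQ.ne'⟩
  · intro a ha b hb hab
    by_contra hne'
    have h1 : (Nat.gcd a Q).minFac ∣ a := (Nat.minFac_dvd _).trans (Nat.gcd_dvd_left _ _)
    have h2 : (Nat.gcd a Q).minFac ∣ b := by
      simp only at hab
      rw [hab]; exact (Nat.minFac_dvd _).trans (Nat.gcd_dvd_left _ _)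
    have := Nat.dvd_gcd h1 h2
    rw [hcop ha hb hne'] at this
    exact (Nat.minFac_prime (hne a ha)).one_lt.ne' (Nat.dvd_one.1 this)

theorem zero_notMem_Dt {B : Set ℕ} (hB : 0 ∉ B) : 0 ∉ Dt B := by
  intro h
  obtain ⟨a, _, _, h⟩ := h 1 one_pos
  rw [zero_mul] at h; exact hB h

theorem behrend_one : Behrend {1} := by
  refine behrend_of_small (by simp) fun ε hε => ⟨1, one_pos, fun t => ?_⟩
  have : FB {1} = ∅ := by ext; simp [FB, MB]
  rw [this]; simp [wc, ind]; exact hε.le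

theorem subset_Cset (B : Set ℕ) : B ⊆ Cset B := fun b hb => ⟨{1}, behrend_one, by simpa⟩

theorem Cset_union {B : Set ℕ} : B ∪ Cset B = Cset B := Set.union_eq_right.2 (subset_Cset B)

theorem zero_notMem_Cset {B : Set ℕ} (hB : 0 ∉ B) : 0 ∉ Cset B :=
  fun h => zero_notMem_Dt hB (Cset_subset_Dt B h)

theorem zero_notMem_Bstar' {B : Set ℕ} (hB : 0 ∉ B) : 0 ∉ B ∪ Dset B := by
  rintro (h | h)
  · exact hB h
  · exact zero_notMem_Dt hB (Dset_subset_Dt B h)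

theorem Bprime_subset {B : Set ℕ} : Bprime B ⊆ Cset B := by
  intro b hb; have := hb.1; rwa [Cset_union] at this

theorem MB_Bprime {B : Set ℕ} (hB : 0 ∉ B) : MB (Bprime B) = MB (Cset B) := by
  unfold Bprime; rw [Cset_union, MB_primPart (zero_notMem_Cset hB)]

theorem MB_subset_Bprime {B : Set ℕ} (hB : 0 ∉ B) : MB B ⊆ MB (Bprime B) := by
  rw [MB_Bprime hB]; exact MB_mono (subset_Cset B)

theorem Bstar_subset_Dt {B : Set ℕ} : Bstar B ⊆ Dt B := by
  intro b hb
  rcases hb.1 with h | h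
  · exact Cset_subset_Dt B (subset_Cset B h)
  · exact Dset_subset_Dt B h

theorem MB_subset_Bstar {B : Set ℕ} (hB : 0 ∉ B) : MB B ⊆ MB (Bstar B) := by
  unfold Bstar
  rw [MB_primPart (zero_notMem_Bstar' hB)]
  exact MB_mono Set.subset_union_left

/-- `Cset B` is closed: it contains each `d` with `d * A ⊆ Cset B` for a Behrend set `A`. -/
theorem Cset_closed {B : Set ℕ} (A : Set ℕ) (hA : Behrend A) (d : ℕ)
    (h : ∀ a ∈ A, d * a ∈ Cset B) : d ∈ Cset B := by
  choose! A' hA' hB' using h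
  refine ⟨{x | ∃ a ∈ A, ∃ y ∈ A' a, x = a * y}, behrend_of_small ?_ ?_, ?_⟩
  · rintro _ ⟨a, ha, y, hy, rfl⟩
    exact Nat.mul_pos (hA.1 a ha) ((hA' a ha).1 y hy)
  · intro ε hε
    obtain ⟨G, hG, hs⟩ := hA.exists_finset (half_pos hε)
    have hk : 0 < ε / 2 / (G.card + 1) := by positivity
    have h1 := BSmall.biUnion G (fun a => {x : ℤ | ∃ y ∈ FB (A' a), x = a * y})
      (fun _ => ε / 2 / (G.card + 1))
      (fun a ha => ((hA' a (hG ha)).small hk).dilate (hA.1 a (hG ha)))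
    refine (hs.union h1).mono ?_ ?_
    · intro x hx
      by_cases hxG : x ∈ FB G
      · exact Or.inl hxG
      · right
        obtain ⟨a, ha, y, rfl⟩ := not_not.1 hxG
        simp only [Set.mem_iUnion]
        refine ⟨a, ha, y, ?_, rfl⟩
        rintro ⟨b, hb, z, rfl⟩
        exact hx ⟨a * b, ⟨a, hG ha, b, hb, rfl⟩, z, by push_cast; ring⟩
    · rw [Finset.sum_const, nsmul_eq_mul]
      have : (G.card : ℝ) * (ε / 2 / (G.card + 1)) ≤ ε / 2 := by
        rw [mul_div_assoc', div_le_iff₀ (by positivity)]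
        nlinarith
      linarith
  · rintro _ ⟨a, ha, y, hy, rfl⟩
    rw [← mul_assoc]; exact hB' a ha y hy

/-- Tautness of `Bprime B`: the quotients by a `Bprime B`-free number do not form a Behrend set. -/
theorem not_small_of_notMem {B : Set ℕ} (hB : 0 ∉ B) {d : ℕ} (hd : (d : ℤ) ∉ MB (Bprime B)) :
    ¬ ∀ ε > 0, BSmall (FB {a | 0 < a ∧ d * a ∈ Bprime B}) ε := by
  intro h
  have hA : Behrend {a | 0 < a ∧ d * a ∈ Bprime B} := behrend_of_small (fun a ha => ha.1) h
  rw [MB_Bprime hB] at hd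
  exact hd ⟨d, Cset_closed _ hA d fun a ha => Bprime_subset ha.2, dvd_rfl⟩

/-- Multiples of an element of `Cset B` are multiples of elements of `B`, up to a small set. -/
theorem small_of_mem_Cset {B : Set ℕ} (hB : 0 ∉ B) {c : ℕ} (hc : c ∈ Cset B) {ε : ℝ}
    (hε : 0 < ε) : BSmall {l : ℤ | (c : ℤ) ∣ l ∧ l ∉ MB B} ε := by
  have hc0 : 0 < c := Nat.pos_of_ne_zero fun h => zero_notMem_Cset hB (h ▸ hc)
  obtain ⟨A, hA, h⟩ := hc
  refine ((hA.small hε).dilate hc0).mono ?_ le_rfl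
  rintro _ ⟨⟨y, rfl⟩, hl⟩
  refine ⟨y, ?_, rfl⟩
  rintro ⟨a, ha, z, rfl⟩
  exact hl ⟨c * a, h a ha, z, by push_cast; ring⟩

/-! ### Sparse tails of sets that are not Behrend -/

theorem ind_inter (S S' : Set ℤ) (x : ℤ) : ind (S ∩ S') x = ind S x * ind S' x := by
  unfold ind; by_cases h : x ∈ S <;> by_cases h' : x ∈ S' <;> simp [h, h']

theorem PerSet.ind_mod {S : Set ℤ} {M : ℕ} (h : PerSet S M) (j : ℕ) :
    BFree.ind S ((j % M : ℕ) : ℤ) = BFree.ind S (j : ℤ) := by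
  have h1 := h.mul ((j / M : ℕ) : ℤ) ((j % M : ℕ) : ℤ)
  have h2 : ((j % M : ℕ) : ℤ) + ((j / M : ℕ) : ℤ) * M = j := by
    have := Nat.mod_add_div j M
    rw [mul_comm] at this
    exact_mod_cast this
  rw [h2] at h1
  unfold BFree.ind
  simp only [h1]

/-- Independence of periodic sets with coprime periods. -/
theorem wc_inter_coprime {S S' : Set ℤ} {a b : ℕ} (h : PerSet S a) (h' : PerSet S' b)
    (hab : Nat.Coprime a b) (ha : 0 < a) (hb : 0 < b) :
    wc (S ∩ S') 0 (a * b) = wc S 0 a * wc S' 0 b := by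
  unfold wc
  rw [Finset.sum_mul_sum, ← Finset.sum_product']
  refine Finset.sum_bij' (fun j _ => (j % a, j % b))
    (fun p _ => (Nat.chineseRemainder hab p.1 p.2 : ℕ)) ?_ ?_ ?_ ?_ ?_
  · intro j _
    rw [Finset.mem_product, Finset.mem_range, Finset.mem_range]
    exact ⟨Nat.mod_lt _ ha, Nat.mod_lt _ hb⟩
  · intro p _
    rw [Finset.mem_range]
    exact Nat.chineseRemainder_lt_mul hab _ _ ha.ne' hb.ne'
  · intro j hj
    rw [Finset.mem_range] at hj
    have h1 := (Nat.chineseRemainder hab (j % a) (j % b)).2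
    have h2 := (Nat.modEq_and_modEq_iff_modEq_mul hab).1
      ⟨h1.1.trans (Nat.mod_modEq j a), h1.2.trans (Nat.mod_modEq j b)⟩
    exact h2.eq_of_lt_of_lt (Nat.chineseRemainder_lt_mul hab _ _ ha.ne' hb.ne') hj
  · rintro ⟨x, y⟩ hp
    rw [Finset.mem_product, Finset.mem_range, Finset.mem_range] at hp
    have h1 := (Nat.chineseRemainder hab x y).2
    ext
    · exact Nat.ModEq.eq_of_lt_of_lt ((Nat.mod_modEq _ _).trans h1.1) (Nat.mod_lt _ ha) hp.1
    · exact Nat.ModEq.eq_of_lt_of_lt ((Nat.mod_modEq _ _).trans h1.2) (Nat.mod_lt _ hb) hp.2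
  · intro j _
    simp only [zero_add]
    rw [ind_inter, h.ind_mod, h'.ind_mod]

/-- The density of the set of multiples of a finite set of positive integers. -/
def dn (G : Finset ℕ) : ℝ := wc (MB G) 0 (∏ g ∈ G, g) / ((∏ g ∈ G, g : ℕ) : ℝ)

theorem dn_eq {G : Finset ℕ} (h0 : ∀ g ∈ G, 0 < g) {M : ℕ} (hM : 0 < M) (h : ∀ g ∈ G, g ∣ M) :
    dn G = wc (MB G) 0 M / M := by
  have hP : 0 < ∏ g ∈ G, g := Finset.prod_pos h0
  have hpG : PerSet (MB G) (∏ g ∈ G, g) := perSet_MB fun a ha => Finset.dvd_prod_of_mem _ ha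
  have hpM : PerSet (MB G) M := perSet_MB fun a ha => h a ha
  unfold dn
  have h1 := hpG.wc_mul M 0
  have h2 := hpM.wc_mul (∏ g ∈ G, g) 0
  rw [mul_comm, h2] at h1
  rw [div_eq_div_iff (by positivity) (by positivity)]
  linarith

theorem dn_compl {G : Finset ℕ} (h0 : ∀ g ∈ G, 0 < g) {M : ℕ} (hM : 0 < M)
    (h : ∀ g ∈ G, g ∣ M) : 1 - dn G = wc (FB G) 0 M / M := by
  rw [dn_eq h0 hM h, ← compl_MB, eq_div_iff (by positivity), sub_mul,
    div_mul_cancel₀ _ (by positivity)]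
  linarith [wc_compl (MB G) 0 M]

theorem dn_le_one {G : Finset ℕ} (h0 : ∀ g ∈ G, 0 < g) : dn G ≤ 1 := by
  have hP : 0 < ∏ g ∈ G, g := Finset.prod_pos h0
  have := dn_compl h0 hP fun g hg => Finset.dvd_prod_of_mem _ hg
  have h2 := div_nonneg (wc_nonneg (FB G) 0 (∏ g ∈ G, g)) (Nat.cast_nonneg (α := ℝ) (∏ g ∈ G, g))
  linarith

/-- Multiples of finite sets with coprime elements are independent. -/
theorem dn_union {G G' : Finset ℕ} (h0 : ∀ g ∈ G, 0 < g) (h0' : ∀ g ∈ G', 0 < g)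
    (hco : ∀ g ∈ G', Nat.Coprime g (∏ g ∈ G, g)) :
    1 - dn (G ∪ G') = (1 - dn G) * (1 - dn G') := by
  have hP : 0 < ∏ g ∈ G, g := Finset.prod_pos h0
  have hP' : 0 < ∏ g ∈ G', g := Finset.prod_pos h0'
  rw [dn_compl h0 hP fun g hg => Finset.dvd_prod_of_mem _ hg,
    dn_compl h0' hP' fun g hg => Finset.dvd_prod_of_mem _ hg,
    dn_compl (M := (∏ g ∈ G, g) * ∏ g ∈ G', g) ?_ (Nat.mul_pos hP hP') ?_]
  · have e : FB ((G ∪ G' : Finset ℕ) : Set ℕ) = FB G ∩ FB G' := by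
      ext x
      simp only [FB, MB, Set.mem_inter_iff, Set.mem_ofPred_eq, Finset.coe_union, Set.mem_union]
      push Not
      constructor
      · intro h; exact ⟨fun b hb => h b (Or.inl hb), fun b hb => h b (Or.inr hb)⟩
      · rintro ⟨h, h'⟩ b (hb | hb); exacts [h b hb, h' b hb]
    rw [e, ← compl_MB, ← compl_MB, wc_inter_coprime (perSet_MB fun a ha => Finset.dvd_prod_of_mem _ ha).compl
      (perSet_MB fun a ha => Finset.dvd_prod_of_mem _ ha).compl
      (Nat.Coprime.prod_right fun g hg => (hco g hg).symm) hP hP']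
    push_cast
    rw [mul_div_mul_comm]
  · intro g hg
    rcases Finset.mem_union.1 hg with h | h
    exacts [h0 g h, h0' g h]
  · intro g hg
    rcases Finset.mem_union.1 hg with h | h
    exacts [dvd_mul_of_dvd_left (Finset.dvd_prod_of_mem _ h) _,
      dvd_mul_of_dvd_right (Finset.dvd_prod_of_mem _ h) _]

/-- The supremum `α` of the densities of the multiples of finite subsets of `A`, with its defining
properties. -/
theorem exists_sup (A : Set ℕ) {c : ℝ}
    (hc : ∀ G : Finset ℕ, ↑G ⊆ A → dn G ≤ c) :
    ∃ α ≤ c, (∀ G : Finset ℕ, ↑G ⊆ A → dn G ≤ α) ∧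
      ∀ ε > 0, ∃ G : Finset ℕ, ↑G ⊆ A ∧ α - ε < dn G := by
  set V : Set ℝ := {x | ∃ G : Finset ℕ, ↑G ⊆ A ∧ x = dn G}
  have hne : V.Nonempty := ⟨dn ∅, ∅, by simp, rfl⟩
  have hbd : BddAbove V := ⟨c, by rintro _ ⟨G, hG, rfl⟩; exact hc G hG⟩
  refine ⟨sSup V, csSup_le hne (by rintro _ ⟨G, hG, rfl⟩; exact hc G hG),
    fun G hG => le_csSup hbd ⟨G, hG, rfl⟩, fun ε hε => ?_⟩
  obtain ⟨_, ⟨G, hG, rfl⟩, h⟩ := exists_lt_of_lt_csSup hne (show sSup V - ε < sSup V by linarith)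
  exact ⟨G, hG, h⟩

/-- If `A` is not Behrend, then the part of `A` coprime to a suitable modulus is sparse: almost all
of the multiples of `A` are captured by a finite subset, and the coprime part is independent of
that subset. -/
theorem tail_small {A : Set ℕ} (h0 : ∀ a ∈ A, 0 < a) (h : ¬ ∀ ε > 0, BSmall (FB A) ε) {ε : ℝ}
    (hε : 0 < ε) :
    ∃ Q > 0, ∀ G : Finset ℕ, ↑G ⊆ A → (∀ g ∈ G, Nat.Coprime g Q) → dn G ≤ ε := by
  push Not at h
  obtain ⟨e, he, hns⟩ := h
  have hb : ∀ G : Finset ℕ, ↑G ⊆ A → dn G ≤ 1 - e := by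
    intro G hG
    by_contra! hcon
    apply hns
    have hG0 : ∀ g ∈ G, 0 < g := fun g hg => h0 g (hG hg)
    have hP : 0 < ∏ g ∈ G, g := Finset.prod_pos hG0
    have hd : ∀ g ∈ G, g ∣ ∏ g ∈ G, g := fun g hg => Finset.dvd_prod_of_mem _ hg
    have h1 := dn_compl hG0 hP hd
    have hpG : PerSet (FB G) (∏ g ∈ G, g) := (perSet_MB fun a ha => hd a ha).compl
    refine BSmall.mono (S := FB G) ⟨_, hP, fun t => ?_⟩ (FB_anti hG) le_rfl
    rw [hpG.wc_eq, ← div_le_iff₀ (by exact_mod_cast hP), ← h1]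
    linarith
  obtain ⟨α, hα, hle, hex⟩ := exists_sup A hb
  obtain ⟨G, hG, hlt⟩ := hex (ε * e) (by positivity)
  have hG0 : ∀ g ∈ G, 0 < g := fun g hg => h0 g (hG hg)
  refine ⟨∏ g ∈ G, g, Finset.prod_pos hG0, fun G' hG' hco => ?_⟩
  have hG0' : ∀ g ∈ G', 0 < g := fun g hg => h0 g (hG' hg)
  have h1 := dn_union hG0 hG0' hco
  have h2 := hle (G ∪ G') (by
    rw [Finset.coe_union]; exact Set.union_subset hG hG')
  have h3 := dn_le_one hG0'
  have h4 := hle G hG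
  by_contra! hcon
  have h5 : 1 - α ≤ (1 - α + ε * e) * (1 - dn G') := by
    refine le_trans (by linarith : 1 - α ≤ (1 - dn G) * (1 - dn G')) ?_
    apply mul_le_mul_of_nonneg_right <;> linarith
  have h6 : ε * e ≤ ε * (1 - α) := by gcongr; linarith
  have h7 : ε * (1 - α) < dn G' * (1 - α) := by apply mul_lt_mul_of_pos_right hcon; linarith
  have h8 : 0 < ε * e * dn G' := by
    have : 0 < dn G' := hε.trans hcon
    positivity
  nlinarith

/-- Multiples of a sparse set coprime to `K` are sparse in each residue class modulo `K`: the total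
logarithmic count is at most its density `α`, and a finite subset already contributes its full share
outside of the class. -/
theorem T_progression {A : Set ℕ} (h0 : ∀ a ∈ A, 0 < a) {K : ℕ} (hK : 0 < K)
    (hco : ∀ a ∈ A, Nat.Coprime a K) {ε : ℝ} (hε : 0 < ε)
    (h : ∀ G : Finset ℕ, ↑G ⊆ A → dn G ≤ ε) (r : ℤ) :
    ∃ C : ℝ, ∀ N, K * T (MB A ∩ {x : ℤ | (K : ℤ) ∣ x - r}) N ≤ 2 * ε * Hn N + C := by
  obtain ⟨α, hα, hle, hex⟩ := exists_sup A h
  have hK' : (1 : ℝ) ≤ K := by exact_mod_cast hK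
  obtain ⟨G, hG, hlt⟩ := hex (ε / K) (by positivity)
  have hG0 : ∀ g ∈ G, 0 < g := fun g hg => h0 g (hG hg)
  set M := ∏ g ∈ G, g with hMdef
  have hM : 0 < M := Finset.prod_pos hG0
  have hM' : (0 : ℝ) < M := by exact_mod_cast hM
  have hd : ∀ g ∈ G, g ∣ M := fun g hg => Finset.dvd_prod_of_mem _ hg
  set P : Set ℤ := {x : ℤ | (K : ℤ) ∣ x - r} with hP
  have hpG : PerSet (MB G) M := perSet_MB fun a ha => hd a ha
  have hpP : PerSet P K := perSet_AP r K
  have hMK : Nat.Coprime M K := Nat.Coprime.prod_left fun g hg => hco g (hG hg)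
  have hper : PerSet (MB G ∩ Pᶜ) (M * K) :=
    (hpG.of_dvd (Dvd.intro _ rfl)).inter (hpP.compl.of_dvd (Dvd.intro_left _ rfl))
  have hw := wc_inter_coprime hpG hpP.compl hMK hM hK
  have hPc : wc Pᶜ 0 K = K - 1 := by
    have h1 := wc_compl P 0 K
    rw [hP, wc_AP r 0 hK] at h1
    rw [hP]; linarith
  have hdn : wc (MB G) 0 M = dn G * M := by rw [dn_eq hG0 hM hd]; field_simp
  rw [hPc, hdn] at hw
  refine ⟨M * K * K, fun N => ?_⟩
  have hHn : 0 ≤ Hn N := Finset.sum_nonneg fun n _ => by positivity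
  -- the upper bound for the whole set of multiples
  have hup : T (MB A) N ≤ α * Hn N := by
    rw [T_MB_trunc]
    set F : Finset ℕ := (Finset.Icc 1 N).filter (· ∈ A) with hF
    have hF0 : ∀ g ∈ F, 0 < g := fun g hg => h0 g (Finset.mem_filter.1 hg).2
    have hPF : 0 < ∏ g ∈ F, g := Finset.prod_pos hF0
    have hdF : ∀ g ∈ F, g ∣ ∏ g ∈ F, g := fun g hg => Finset.dvd_prod_of_mem _ hg
    have h1 := T_le_dens F hPF hdF N
    have h2 := hle F (fun g hg => (Finset.mem_filter.1 hg).2)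
    rw [dn_eq hF0 hPF hdF, div_le_iff₀ (by exact_mod_cast hPF)] at h2
    refine le_of_mul_le_mul_right ?_ (show (0 : ℝ) < ((∏ g ∈ F, g : ℕ) : ℝ) by exact_mod_cast hPF)
    nlinarith
  -- the lower bound off the residue class
  have hlow := T_ge_of_wc (fun t => (hper.wc_eq t).ge) N
  rw [hw] at hlow
  have hsplit : T (MB A ∩ P) N + T (MB G ∩ Pᶜ) N ≤ T (MB A) N := by
    unfold T
    rw [← Finset.sum_add_distrib]
    refine Finset.sum_le_sum fun n _ => ?_
    rw [← add_mul]
    gcongr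
    rw [ind_inter, ind_inter]
    have h1 := ind_compl P n
    have h2 := ind_mono (MB_mono hG) (n : ℤ)
    have h3 := ind_nonneg P n
    have h4 := ind_nonneg Pᶜ n
    have h5 := mul_le_mul_of_nonneg_right h2 h4
    have h6 : ind (MB A) n * (ind P n + ind Pᶜ n) = ind (MB A) n := by rw [h1, mul_one]
    linarith
  push_cast at hlow
  have hlow' : dn G * (K - 1) * Hn N ≤ K * T (MB G ∩ Pᶜ) N + M * K * K := by
    refine le_of_mul_le_mul_left ?_ hM'
    nlinarith
  have h1 : (α - ε / K) * (K - 1) * Hn N ≤ dn G * (K - 1) * Hn N := by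
    gcongr
  have h2 : (α - ε / K) * (K - 1) = α * K - α - ε + ε / K := by field_simp; ring
  have h3 : 0 ≤ ε / K := by positivity
  rw [h2] at h1
  have h4 : (K : ℝ) * (T (MB A ∩ P) N + T (MB G ∩ Pᶜ) N) ≤ K * (α * Hn N) := by
    gcongr; exact hsplit.trans hup
  nlinarith [mul_nonneg h3 hHn, mul_le_mul_of_nonneg_right hα hHn]

/-! ### Free points in a residue class -/

theorem T_le_sum {ι : Type*} (J : Finset ι) (S : Set ℤ) (S' : ι → Set ℤ)
    (h : ∀ x ∈ S, ∃ j ∈ J, x ∈ S' j) (N : ℕ) : T S N ≤ ∑ j ∈ J, T (S' j) N := by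
  unfold T
  rw [Finset.sum_comm]
  refine Finset.sum_le_sum fun n _ => ?_
  rw [← Finset.sum_mul]
  gcongr
  by_cases hn : (n : ℤ) ∈ S
  · obtain ⟨j, hj, hx⟩ := h _ hn
    rw [ind_of_mem hn, ← ind_of_mem hx]
    exact Finset.single_le_sum (f := fun j => ind (S' j) (n : ℤ)) (fun i _ => ind_nonneg _ _) hj
  · rw [ind_of_notMem hn]
    exact Finset.sum_nonneg fun i _ => ind_nonneg _ _

/-- A residue class contains a point avoiding finitely many sparse sets of multiples. -/
theorem exists_avoid {ι : Type*} (J : Finset ι) (sh : ι → ℕ) (A : ι → Set ℕ) {K : ℕ} (hK : 0 < K)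
    (h0 : ∀ j ∈ J, ∀ a ∈ A j, 0 < a) (hco : ∀ j ∈ J, ∀ a ∈ A j, Nat.Coprime a K)
    (hd : ∀ j ∈ J, ∀ G : Finset ℕ, ↑G ⊆ A j → dn G ≤ 1 / (4 * (J.card + 1))) (r : ℤ) :
    ∃ x : ℤ, (K : ℤ) ∣ x - r ∧ ∀ j ∈ J, x + sh j ∉ MB (A j) := by
  by_contra! hcon
  have hε : (0 : ℝ) < 1 / (4 * (J.card + 1)) := by positivity
  have hK' : (0 : ℝ) < K := by exact_mod_cast hK
  have hC : ∀ j ∈ J, ∃ C : ℝ, ∀ N, K * T (MB (A j) ∩ {x : ℤ | (K : ℤ) ∣ x - (r + sh j)}) N ≤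
      2 * (1 / (4 * (J.card + 1))) * Hn N + C := fun j hj =>
    T_progression (h0 j hj) hK (hco j hj) hε (hd j hj) _
  choose! C hC using hC
  have hkey : ∀ N, Hn N ≤ 2 * (∑ j ∈ J, (C j + K * sh j) + K * K) := by
    intro N
    have hHn : 0 ≤ Hn N := Finset.sum_nonneg fun n _ => by positivity
    have h1 := T_ge_of_wc (fun t => (wc_AP r t hK).ge) N
    have h2 := T_le_sum J {x : ℤ | (K : ℤ) ∣ x - r}
      (fun j => {x : ℤ | x + sh j ∈ MB (A j) ∩ {x : ℤ | (K : ℤ) ∣ x - (r + sh j)}}) (by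
        intro x hx
        obtain ⟨j, hj, hm⟩ := hcon x hx
        refine ⟨j, hj, hm, ?_⟩
        simpa using hx) N
    have h3 : K * T {x : ℤ | (K : ℤ) ∣ x - r} N ≤
        ∑ j ∈ J, (2 * (1 / (4 * (J.card + 1))) * Hn N + (C j + K * sh j)) := by
      refine (mul_le_mul_of_nonneg_left h2 hK'.le).trans ?_
      rw [Finset.mul_sum]
      refine Finset.sum_le_sum fun j hj => ?_
      refine (mul_le_mul_of_nonneg_left (T_shift _ N (sh j)).1 hK'.le).trans ?_
      have := hC j hj N
      linarith
    rw [Finset.sum_add_distrib, Finset.sum_const, nsmul_eq_mul] at h3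
    have h4 : (J.card : ℝ) * (2 * (1 / (4 * (J.card + 1))) * Hn N) ≤ Hn N / 2 := by
      have : (J.card : ℝ) * (2 * (1 / (4 * (J.card + 1)))) ≤ 1 / 2 := by
        rw [mul_one_div, mul_div_assoc', div_le_div_iff₀ (by positivity) (by positivity)]
        linarith
      nlinarith
    linarith
  obtain ⟨N, hN⟩ := (tendsto_Hn.eventually_gt_atTop _).exists
  exact absurd (hkey N) (not_le.2 hN)

/-- A common parameter `t` makes several arithmetic progressions coprime to `R`. A prime `p ≤ n`
divides all common differences and causes no obstruction; for a prime `p > n` each of the at most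
`n` progressions excludes at most one residue of `t` modulo `p`. -/
theorem exists_coprime_translate {n : ℕ} (P : Finset ℕ) (hP : P ⊆ Finset.range n) (u k : ℕ → ℤ)
    (huk : ∀ i ∈ P, IsCoprime (u i) (k i))
    (hk : ∀ i ∈ P, ∀ p : ℕ, p.Prime → p ≤ n → (p : ℤ) ∣ k i) {R : ℕ} :
    R ≠ 0 → ∃ t : ℤ, ∀ i ∈ P, IsCoprime (u i + k i * t) R := by
  intro hR
  have hloc : ∀ p : ℕ, p.Prime → ∃ t : ℕ, ∀ i ∈ P, ¬ (p : ℤ) ∣ u i + k i * t := by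
    intro p hp
    have hnot : ∀ i ∈ P, (p : ℤ) ∣ k i → ¬ (p : ℤ) ∣ u i := by
      intro i hi h1 h2
      have := (huk i hi).isUnit_of_dvd' h2 h1
      exact (Nat.prime_iff_prime_int.1 hp).not_isUnit this
    rcases le_or_gt p n with hpn | hpn
    · refine ⟨0, fun i hi h => ?_⟩
      exact hnot i hi (hk i hi p hp hpn) (by simpa using h)
    · -- each `i` excludes at most one residue, and there are fewer than `p` of them
      by_contra! hcon
      choose f hfP hf using hcon
      obtain ⟨x, hx, y, hy, hxy, he⟩ := Finset.exists_ne_map_eq_of_card_lt_of_maps_to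
        (s := Finset.range p) (t := P) (f := f)
        (by
          have := Finset.card_le_card hP
          rw [Finset.card_range] at *
          omega)
        (fun t _ => hfP t)
      have h1 := hf x
      have h2 := hf y
      rw [← he] at h2
      have h3 := dvd_sub h1 h2
      have h4 : (p : ℤ) ∣ k (f x) * ((x : ℤ) - y) := by
        have e : k (f x) * ((x : ℤ) - y) = u (f x) + k (f x) * x - (u (f x) + k (f x) * y) := by
          ring
        rw [e]; exact h3
      rcases (Nat.prime_iff_prime_int.1 hp).dvd_or_dvd h4 with h5 | h5
      · exact hnot _ (hfP x) h5 ((Int.dvd_add_left (h5.mul_right _)).1 h1)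
      · rw [Finset.mem_range] at hx hy
        have hmod : x ≡ y [MOD p] := ((Nat.modEq_iff_dvd).2 (by
          rw [← neg_sub, dvd_neg] ; exact h5))
        exact hxy (hmod.eq_of_lt_of_lt hx hy)
  choose! τ hτ using hloc
  obtain ⟨t, ht⟩ := Nat.chineseRemainderOfFinset τ id R.primeFactors
    (fun p hp => (Nat.prime_of_mem_primeFactors hp).ne_zero)
    (fun p hp q hq hpq => (Nat.coprime_primes (Nat.prime_of_mem_primeFactors hp)
      (Nat.prime_of_mem_primeFactors hq)).2 hpq)
  refine ⟨t, fun i hi => ?_⟩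
  rw [Int.isCoprime_iff_gcd_eq_one]
  by_contra hg
  obtain ⟨p, hp, hpg⟩ := Nat.exists_prime_and_dvd hg
  have hp1 : (p : ℤ) ∣ u i + k i * t :=
    (Int.natCast_dvd_natCast.2 hpg).trans (Int.gcd_dvd_left _ _)
  have hp2 : (p : ℤ) ∣ R := (Int.natCast_dvd_natCast.2 hpg).trans (Int.gcd_dvd_right _ _)
  have hpR : p ∈ R.primeFactors := by
    rw [Nat.mem_primeFactors]; exact ⟨hp, Int.natCast_dvd_natCast.1 hp2, hR⟩
  have hmod := (Nat.modEq_iff_dvd).1 (ht p hpR)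
  simp only [id] at hmod
  refine hτ p hp i hi ?_
  have : u i + k i * (τ p : ℤ) = u i + k i * t + k i * (τ p - t) := by ring
  rw [this]
  exact dvd_add hp1 (hmod.mul_left _)

/-- The conditions at the positions `m + i`, `i ∈ P`, which allow them to be made `C`-free within the
residue class of `m` modulo `K`: no element of `C` dividing `K` divides `m + i`, and no prime
`p ≤ n` imposes a constraint, since the `p`-part of the class of `m + i` is already determined
by its greatest common divisor with `K`. -/
def Good (C : Set ℕ) (n : ℕ) (P : Finset ℕ) (m : ℤ) (K : ℕ) : Prop :=
  ∀ i ∈ P, (∀ p : ℕ, p.Prime → p ≤ n → p ∣ K / Int.gcd (m + i) K) ∧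
    ∀ c ∈ C, c ∣ K → ¬ (c : ℤ) ∣ m + i

/-- Under `Good`, some point of the residue class has all positions in `P` free. With `g i` the
greatest common divisor of `m + i` and `K`, an appropriate choice makes `(m' + i) / g i` coprime to a
large `R`, and so a divisor `b ∈ Bprime B` of `m' + i` factors as `d * b1` with `d ∣ g i` and `b1`
coprime to `R`. Such `b1` form sparse sets, which can be avoided. -/
theorem Good.exists_free {B : Set ℕ} (hB : 0 ∉ B) {n : ℕ} {P : Finset ℕ}
    (hP : P ⊆ Finset.range n) {m : ℤ} {K : ℕ} (hK : 0 < K) (h : Good (Bprime B) n P m K) :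
    ∃ m' : ℤ, (K : ℤ) ∣ m' - m ∧ ∀ i ∈ P, m' + i ∉ MB (Bprime B) := by
  set E : Finset ℕ := K.divisors.filter (fun d => (d : ℤ) ∉ MB (Bprime B)) with hE
  set J := P ×ˢ E with hJ
  have htail : ∀ d ∈ E, ∃ Q > 0, ∀ G : Finset ℕ, ↑G ⊆ {a | 0 < a ∧ d * a ∈ Bprime B} →
      (∀ g ∈ G, Nat.Coprime g Q) → dn G ≤ 1 / (4 * (J.card + 1)) := fun d hd =>
    tail_small (fun a ha => ha.1) (not_small_of_notMem hB (Finset.mem_filter.1 hd).2)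
      (by positivity)
  choose! Q hQ0 hQ using htail
  set R := K * ∏ d ∈ E, Q d with hR
  have hR0 : 0 < R := Nat.mul_pos hK (Finset.prod_pos hQ0)
  set g : ℕ → ℕ := fun i => Int.gcd (m + i) K with hg
  have hg0 : ∀ i, 0 < g i := fun i => Int.gcd_pos_of_ne_zero_right _ (by exact_mod_cast hK.ne')
  have hg0' : ∀ i, (g i : ℤ) ≠ 0 := fun i => by exact_mod_cast (hg0 i).ne'
  have hgK : ∀ i, g i ∣ K := fun i => Int.natCast_dvd_natCast.1 (Int.gcd_dvd_right _ _)
  have hgm : ∀ i : ℕ, (g i : ℤ) ∣ m + i := fun i => Int.gcd_dvd_left _ _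
  have hu : ∀ i : ℕ, (g i : ℤ) * ((m + i) / g i) = m + i := fun i => Int.mul_ediv_cancel' (hgm i)
  have hk : ∀ i : ℕ, (g i : ℤ) * ((K : ℤ) / g i) = K := fun i =>
    Int.mul_ediv_cancel' (Int.gcd_dvd_right _ _)
  obtain ⟨t, ht⟩ := exists_coprime_translate P hP (fun i => (m + i) / g i) (fun i => (K : ℤ) / g i)
    (fun i _ => by
      rw [Int.isCoprime_iff_gcd_eq_one]
      exact Int.gcd_div_gcd_div_gcd (hg0 i))
    (fun i hi p hp hpn => by
      have := (h i hi).1 p hp hpn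
      exact_mod_cast Int.natCast_dvd_natCast.2 this) hR0.ne'
  obtain ⟨x, hx, hav⟩ := exists_avoid J (fun j => j.1)
    (fun j => {a | (0 < a ∧ j.2 * a ∈ Bprime B) ∧ Nat.Coprime a R}) (Nat.mul_pos hK hR0)
    (fun j _ a ha => ha.1.1)
    (fun j _ a ha => Nat.Coprime.mul_right (ha.2.coprime_dvd_right (Dvd.intro _ rfl)) ha.2)
    (fun j hj G hG => by
      have hjE := (Finset.mem_product.1 hj).2
      refine hQ j.2 hjE G (fun a ha => (hG ha).1) fun a ha => ?_
      exact (hG ha).2.coprime_dvd_right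
        (dvd_mul_of_dvd_right (Finset.dvd_prod_of_mem _ hjE) _))
    (m + K * t)
  obtain ⟨z, hz⟩ := hx
  push_cast at hz
  refine ⟨x, ⟨t + R * z, by linarith⟩, fun i hi => ?_⟩
  rintro ⟨b, hb, hbx⟩
  set u' : ℤ := (m + i) / g i + ((K : ℤ) / g i) * t + ((K : ℤ) / g i) * z * R with hu'
  have hxu : x + i = g i * u' := by
    have e1 : (g i : ℤ) * u' = (g i : ℤ) * ((m + i) / g i) + ((g i : ℤ) * ((K : ℤ) / g i)) * t +
      ((g i : ℤ) * ((K : ℤ) / g i)) * z * R := by rw [hu']; ring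
    rw [e1, hu, hk]; linarith
  have hcop : IsCoprime u' (R : ℤ) := (ht i hi).add_mul_right_left _
  have hb0 : 0 < b := Nat.pos_of_ne_zero fun h0 =>
    zero_notMem_Cset hB (Bprime_subset (h0 ▸ hb))
  -- split off from `b` its common part `d` with the fixed divisor
  set d := Nat.gcd b (g i) with hd
  have hd0 : 0 < d := Nat.gcd_pos_of_pos_left _ hb0
  obtain ⟨b1, hb1⟩ := Nat.gcd_dvd_left b (g i)
  obtain ⟨g1, hg1⟩ := Nat.gcd_dvd_right b (g i)
  rw [← hd] at hb1 hg1
  have hcop1 : Nat.Coprime b1 g1 := by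
    have := Nat.coprime_div_gcd_div_gcd hd0
    rw [← hd] at this
    rwa [Nat.div_eq_of_eq_mul_right hd0 hb1, Nat.div_eq_of_eq_mul_right hd0 hg1] at this
  have hb1u : (b1 : ℤ) ∣ u' := by
    rw [hxu, hg1, hb1] at hbx
    push_cast at hbx
    rw [mul_assoc] at hbx
    have := (mul_dvd_mul_iff_left (show (d : ℤ) ≠ 0 by exact_mod_cast hd0.ne')).1 hbx
    exact (Nat.isCoprime_iff_coprime.2 hcop1).dvd_of_dvd_mul_left this
  have hb1R : Nat.Coprime b1 R :=
    Nat.isCoprime_iff_coprime.1 (hcop.of_isCoprime_of_dvd_left hb1u)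
  have hdg : d ∣ g i := Nat.gcd_dvd_right _ _
  have hdE : d ∈ E := by
    rw [hE, Finset.mem_filter, Nat.mem_divisors]
    refine ⟨⟨hdg.trans (hgK i), hK.ne'⟩, ?_⟩
    rintro ⟨c, hc, hcd⟩
    refine (h i hi).2 c hc ((Int.natCast_dvd_natCast.1 hcd).trans (hdg.trans (hgK i))) ?_
    exact hcd.trans ((Int.natCast_dvd_natCast.2 hdg).trans (hgm i))
  refine hav (i, d) (Finset.mem_product.2 ⟨hi, hdE⟩) ⟨b1, ⟨⟨?_, ?_⟩, hb1R⟩, ?_⟩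
  · exact Nat.pos_of_ne_zero fun h0 => by simp [h0] at hb1; omega
  · show d * b1 ∈ Bprime B
    rw [← hb1]; exact hb
  · exact (Dvd.intro_left _ (by rw [hb1]; push_cast; rfl) : (b1 : ℤ) ∣ b).trans hbx

/-! ### Realizing patterns -/

theorem dvd_of_cong {c s : ℕ} {m m' : ℤ} {i : ℕ} (hcs : c ∣ s) (hs : (s : ℤ) ∣ m' - m) :
    (c : ℤ) ∣ m' + i ↔ (c : ℤ) ∣ m + i := by
  have h1 : (c : ℤ) ∣ m' - m := (Int.natCast_dvd_natCast.2 hcs).trans hs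
  have e : m' + i = (m' - m) + (m + i) := by ring
  rw [e, Int.dvd_add_right h1]

/-- Enlarging the modulus so that the position `m + i₀` becomes a multiple of an element `d * a` of
`B`. As `a` is coprime to `s` and to `n!`, no prime factor of `a` divides another position of the
window, so `Good` is preserved. -/
theorem Good.step {B C : Set ℕ} {n : ℕ} {P : Finset ℕ} (hP : P ⊆ Finset.range n) {m : ℤ} {s : ℕ}
    (hs : 0 < s) (h : Good C n P m s) {i₀ : ℕ} (hi₀ : i₀ < n) (hiP : i₀ ∉ P) {d : ℕ}
    (hd : d ∈ Dt B) (hds : d ∣ s) (hdm : (d : ℤ) ∣ m + i₀) :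
    ∃ (m' : ℤ) (s' : ℕ), 0 < s' ∧ s ∣ s' ∧ (s : ℤ) ∣ m' - m ∧ Good C n P m' s' ∧
      ∃ b ∈ B, b ∣ s' ∧ (b : ℤ) ∣ m' + i₀ := by
  obtain ⟨a, ha0, hco, hda⟩ := hd (s * n.factorial) (Nat.mul_pos hs (Nat.factorial_pos n))
  have has : Nat.Coprime a s := hco.coprime_dvd_right (Dvd.intro _ rfl)
  have han : Nat.Coprime a n.factorial := hco.coprime_dvd_right (Dvd.intro_left _ rfl)
  obtain ⟨x, y, hxy⟩ := Nat.isCoprime_iff_coprime.2 has.symm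
  set m' : ℤ := m + s * (x * (-i₀ - m)) with hm'
  have hmm : (s : ℤ) ∣ m' - m := ⟨x * (-i₀ - m), by rw [hm']; ring⟩
  have ham : (a : ℤ) ∣ m' + i₀ := ⟨(m + i₀) * y, by
    rw [hm']
    have : (m + i₀) * (x * s + y * a) = m + i₀ := by rw [hxy, mul_one]
    linarith⟩
  refine ⟨m', s * a, Nat.mul_pos hs ha0, Dvd.intro _ rfl, hmm, ?_, d * a, hda,
    Nat.mul_dvd_mul_right hds a, ?_⟩
  · intro i hi
    have hin := Finset.mem_range.1 (hP hi)
    have hne : i ≠ i₀ := fun h => hiP (h ▸ hi)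
    have hcop : Int.gcd (m' + i) a = 1 := by
      by_contra hg
      obtain ⟨q, hq, hqg⟩ := Nat.exists_prime_and_dvd hg
      have h1 : (q : ℤ) ∣ m' + i := (Int.natCast_dvd_natCast.2 hqg).trans (Int.gcd_dvd_left _ _)
      have h2 : (q : ℤ) ∣ a := (Int.natCast_dvd_natCast.2 hqg).trans (Int.gcd_dvd_right _ _)
      have h3 : (q : ℤ) ∣ (i : ℤ) - i₀ := by
        have e : (i : ℤ) - i₀ = (m' + i) - (m' + i₀) := by ring
        rw [e]; exact dvd_sub h1 (h2.trans ham)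
      have h4 : q ∣ ((i : ℤ) - i₀).natAbs := Int.natCast_dvd.1 h3
      have h5 := Nat.le_of_dvd (by omega) h4
      have h6 : q ∣ n.factorial := Nat.dvd_factorial hq.pos (by omega)
      have h7 := Nat.dvd_gcd (Int.natCast_dvd_natCast.1 h2) h6
      rw [han] at h7
      exact hq.one_lt.ne' (Nat.dvd_one.1 h7)
    have hgeq : Int.gcd (m' + i) ((s * a : ℕ) : ℤ) = Int.gcd (m + i) s := by
      rw [Int.natCast_mul, Int.gcd_mul_left_right_of_gcd_eq_one hcop]
      apply Nat.dvd_antisymm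
      · refine Int.dvd_gcd ?_ (Int.gcd_dvd_right _ _)
        rw [← dvd_of_cong (Int.natCast_dvd_natCast.1 (Int.gcd_dvd_right _ _)) hmm]
        exact Int.gcd_dvd_left _ _
      · refine Int.dvd_gcd ?_ (Int.gcd_dvd_right _ _)
        rw [dvd_of_cong (Int.natCast_dvd_natCast.1 (Int.gcd_dvd_right _ _)) hmm]
        exact Int.gcd_dvd_left _ _
    refine ⟨fun p hp hpn => ?_, fun c hc hcs hcm => ?_⟩
    · rw [hgeq, Nat.mul_comm s a, Nat.mul_div_assoc _
        (Int.natCast_dvd_natCast.1 (Int.gcd_dvd_right _ _))]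
      exact ((h i hi).1 p hp hpn).mul_left a
    · have hca : Nat.Coprime c a := by
        rw [← Nat.isCoprime_iff_coprime]
        exact (Int.isCoprime_iff_gcd_eq_one.2 hcop).of_isCoprime_of_dvd_left hcm
      have hcs' := hca.dvd_of_dvd_mul_right hcs
      exact (h i hi).2 c hc hcs' ((dvd_of_cong hcs' hmm).1 hcm)
  · push_cast
    refine IsCoprime.mul_dvd ?_ ((dvd_of_cong hds hmm).2 hdm) ham
    exact Nat.isCoprime_iff_coprime.2 (has.symm.coprime_dvd_left hds)

/-- `Good.step` applied successively to all positions in `Z`. -/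
theorem Good.steps {B C : Set ℕ} {n : ℕ} {P : Finset ℕ} (hP : P ⊆ Finset.range n)
    (Z : Finset ℕ) (hZ : ∀ i ∈ Z, i < n ∧ i ∉ P) : ∀ {m : ℤ} {s : ℕ},
    0 < s → Good C n P m s → (∀ i ∈ Z, ∃ d ∈ Dt B, d ∣ s ∧ (d : ℤ) ∣ m + i) →
    ∃ (m' : ℤ) (s' : ℕ), 0 < s' ∧ s ∣ s' ∧ (s : ℤ) ∣ m' - m ∧ Good C n P m' s' ∧
      ∀ i ∈ Z, ∃ b ∈ B, b ∣ s' ∧ (b : ℤ) ∣ m' + i := by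
  induction Z using Finset.induction_on with
  | empty => exact fun {m s} hs h _ => ⟨m, s, hs, dvd_rfl, by simp, h, by simp⟩
  | insert i₀ Z hi ih =>
    intro m s hs h hd
    obtain ⟨d, hdD, hds, hdm⟩ := hd i₀ (Finset.mem_insert_self _ _)
    have hi0 := hZ i₀ (Finset.mem_insert_self _ _)
    obtain ⟨m₁, s₁, hs₁, hss₁, hmm₁, h₁, b, hb, hbs, hbm⟩ := h.step hP hs hi0.1 hi0.2 hdD hds hdm
    obtain ⟨m', s', hs', hss', hmm', h', hZ'⟩ := ih
      (fun i hi => hZ i (Finset.mem_insert_of_mem hi)) hs₁ h₁ (fun i hi => by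
        obtain ⟨d, hdD, hds, hdm⟩ := hd i (Finset.mem_insert_of_mem hi)
        exact ⟨d, hdD, hds.trans hss₁, (dvd_of_cong hds hmm₁).2 hdm⟩)
    refine ⟨m', s', hs', hss₁.trans hss', ?_, h', fun i hi => ?_⟩
    · have e : m' - m = (m' - m₁) + (m₁ - m) := by ring
      rw [e]
      exact dvd_add ((Int.natCast_dvd_natCast.2 hss₁).trans hmm') hmm₁
    · rcases Finset.mem_insert.1 hi with rfl | hi
      · exact ⟨b, hb, hbs.trans hss', (dvd_of_cong hbs hmm').2 hbm⟩
      · exact hZ' i hi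

/-- Realization of a pattern: at some `m'`, the positions in `P` become `Bprime B`-free, and the other positions
become multiples of elements of `B`. -/
theorem realize {B : Set ℕ} (hB : 0 ∉ B) {n : ℕ} {P : Finset ℕ} (hP : P ⊆ Finset.range n)
    {m : ℤ} {s : ℕ} (hs : 0 < s) (h : Good (Bprime B) n P m s)
    (hZ : ∀ i < n, i ∉ P → ∃ d ∈ Dt B, d ∣ s ∧ (d : ℤ) ∣ m + i) :
    ∃ m' : ℤ, (∀ i ∈ P, m' + i ∉ MB (Bprime B)) ∧ ∀ i < n, i ∉ P → m' + i ∈ MB B := by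
  obtain ⟨m₁, s₁, hs₁, _, _, h₁, hZ₁⟩ := h.steps hP (Finset.range n \ P)
    (fun i hi => by rw [Finset.mem_sdiff, Finset.mem_range] at hi; exact hi) hs
    (fun i hi => by rw [Finset.mem_sdiff, Finset.mem_range] at hi; exact hZ i hi.1 hi.2)
  obtain ⟨m', hm', hfree⟩ := h₁.exists_free hB hP hs₁
  refine ⟨m', hfree, fun i hi hiP => ?_⟩
  obtain ⟨b, hb, hbs, hbm⟩ := hZ₁ i (by
    rw [Finset.mem_sdiff, Finset.mem_range]; exact ⟨hi, hiP⟩)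
  exact ⟨b, hb, (dvd_of_cong hbs hm').2 hbm⟩

/-! ### Words and periodic positions -/

theorem eta_eq_true (B : Set ℕ) (m : ℤ) : eta B m = true ↔ m ∉ MB B := by
  unfold eta FB
  simp only [Set.mem_ofPred_eq]
  split_ifs with h <;> simp [h]

/-- If a whole residue class modulo `s` consists of multiples of `Bstar B`, then, by Dirichlet's
theorem, it does so because of a common divisor of the class belonging to `Dt B`. -/
theorem exists_Dt_of_class {B : Set ℕ} {x : ℤ} {s : ℕ} (hs : 0 < s)
    (h : ∀ k : ℤ, x + s * k ∈ MB (Bstar B)) : ∃ d ∈ Dt B, d ∣ s ∧ (d : ℤ) ∣ x := by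
  set g := Int.gcd x s with hg
  have hg0 : 0 < g := Int.gcd_pos_of_ne_zero_right _ (by exact_mod_cast hs.ne')
  have hgs : g ∣ s := Int.natCast_dvd_natCast.1 (Int.gcd_dvd_right _ _)
  have hgx : (g : ℤ) ∣ x := Int.gcd_dvd_left _ _
  by_contra! hcon
  have hno : ∀ d ∈ g.divisors, ∃ Q > 0, ∀ a > 0, Nat.Coprime a Q → d * a ∉ B := by
    intro d hd
    have hdg := (Nat.mem_divisors.1 hd).1
    by_contra! hc
    exact hcon d hc (hdg.trans hgs) ((Int.natCast_dvd_natCast.2 hdg).trans hgx)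
  choose! Q hQ0 hQ using hno
  obtain ⟨s', hs'⟩ := hgs
  obtain ⟨x', hx'⟩ := hgx
  have hs'0 : s' ≠ 0 := by rintro rfl; simp at hs'; omega
  have hg' : (g : ℤ) ≠ 0 := by exact_mod_cast hg0.ne'
  have hcop : Int.gcd x' s' = 1 := by
    have h1 := Int.gcd_mul_left (g : ℤ) x' s'
    have h2 : (s : ℤ) = g * s' := by exact_mod_cast hs'
    rw [← hx', ← h2, ← hg, Int.natAbs_natCast] at h1
    exact Nat.eq_of_mul_eq_mul_left hg0 (by rw [← h1, mul_one])
  obtain ⟨q, hqgt, hq, hqmod⟩ := Nat.forall_exists_prime_gt_and_zmodEq (∏ d ∈ g.divisors, Q d)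
    hs'0 (Int.isCoprime_iff_gcd_eq_one.2 hcop)
  have hmod : (s' : ℤ) ∣ q - x' := (Int.modEq_iff_dvd).1 hqmod.symm
  obtain ⟨k, hk⟩ := hmod
  obtain ⟨b, hb, hbx⟩ := h k
  have e : x + s * k = ((g * q : ℕ) : ℤ) := by
    rw [hx', hs']; push_cast
    have : (q : ℤ) = x' + s' * k := by linarith
    rw [this]; ring
  rw [e, Int.natCast_dvd_natCast] at hbx
  by_cases hqb : q ∣ b
  · obtain ⟨d, rfl⟩ := hqb
    have hdg : d ∣ g := by
      rw [mul_comm g q] at hbx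
      exact Nat.dvd_of_mul_dvd_mul_left hq.pos hbx
    have hdd : d ∈ g.divisors := Nat.mem_divisors.2 ⟨hdg, hg0.ne'⟩
    obtain ⟨a, ha0, haQ, haB⟩ := Bstar_subset_Dt hb (Q d) (hQ0 d hdd)
    refine hQ d hdd (q * a) (Nat.mul_pos hq.pos ha0) (Nat.Coprime.mul_left ?_ haQ) ?_
    · rw [hq.coprime_iff_not_dvd]
      intro hqQ
      have h1 := Nat.le_of_dvd (hQ0 d hdd) hqQ
      have h2 := Nat.le_of_dvd (Finset.prod_pos hQ0) (Finset.dvd_prod_of_mem Q hdd)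
      omega
    · have : d * (q * a) = q * d * a := by ring
      rwa [this]
  · have hbg : b ∣ g :=
      (Nat.Coprime.symm ((hq.coprime_iff_not_dvd).2 hqb)).dvd_of_dvd_mul_right hbx
    exact hcon b (Bstar_subset_Dt hb) (hbg.trans (Dvd.intro _ hs'.symm))
      ((Int.natCast_dvd_natCast.2 hbg).trans (Dvd.intro _ hx'.symm))

/-- The word of length `n` with set of ones `P` occurs in `z` at position `m`. -/
def Occ (z : ℤ → Bool) (n : ℕ) (P : Finset ℕ) (m : ℤ) : Prop :=
  ∀ i < n, z (m + i) = true ↔ i ∈ P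

/-- Every word of `eta (Bprime B)` occurs in `eta B`. -/
theorem occ_of_occ_prime {B : Set ℕ} (hB : 0 ∉ B) (m : ℤ) (n : ℕ) :
    ∃ m' : ℤ, ∀ i < n, eta (Bprime B) (m + (i : ℕ)) = eta B (m' + (i : ℕ)) := by
  by_cases hne : Bprime B = ∅
  · refine ⟨m, fun i _ => ?_⟩
    rw [Bool.eq_iff_iff, eta_eq_true, eta_eq_true]
    have h1 : MB (Bprime B) = ∅ := by rw [hne]; ext; simp [MB]
    have h2 : MB B = ∅ := Set.subset_empty_iff.1 (h1 ▸ MB_subset_Bprime hB)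
    rw [h1, h2]
  · set P : Finset ℕ := (Finset.range n).filter (fun i => m + (i : ℕ) ∉ MB (Bprime B)) with hPdef
    set Z : Finset ℕ := (Finset.range n).filter (fun i => m + (i : ℕ) ∈ MB (Bprime B)) with hZdef
    have hP : P ⊆ Finset.range n := Finset.filter_subset _ _
    have hc : ∀ i ∈ Z, ∃ c ∈ Bprime B, (c : ℤ) ∣ m + i := fun i hi => (Finset.mem_filter.1 hi).2
    choose! c hcB hcm using hc
    have hc0 : ∀ i ∈ Z, 0 < c i := fun i hi => Nat.pos_of_ne_zero fun h =>
      zero_notMem_Cset hB (h ▸ Bprime_subset (hcB i hi))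
    have hm0 : ∀ i ∈ P, 0 < (m + i).natAbs := by
      intro i hi
      obtain ⟨b, hb⟩ := Set.nonempty_iff_ne_empty.2 hne
      refine Int.natAbs_pos.2 fun h => (Finset.mem_filter.1 hi).2 ?_
      rw [h]; exact ⟨b, hb, dvd_zero _⟩
    set s : ℕ := n.factorial * (∏ i ∈ P, (m + i).natAbs) * ∏ i ∈ Z, c i with hs
    have hs0 : 0 < s := Nat.mul_pos (Nat.mul_pos (Nat.factorial_pos _) (Finset.prod_pos hm0))
      (Finset.prod_pos hc0)
    have hgood : Good (Bprime B) n P m s := by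
      intro i hi
      have hd : n.factorial * (m + i).natAbs ∣ s :=
        dvd_mul_of_dvd_left (Nat.mul_dvd_mul_left _
          (Finset.dvd_prod_of_mem (fun i : ℕ => (m + i).natAbs) hi)) _
      have hgcd : Int.gcd (m + i) s = (m + i).natAbs :=
        Nat.gcd_eq_left ((Dvd.intro_left _ rfl).trans hd)
      refine ⟨fun p hp hpn => ?_, fun c hc _ hcm => (Finset.mem_filter.1 hi).2 ⟨c, hc, hcm⟩⟩
      rw [hgcd]
      refine (Nat.dvd_factorial hp.pos hpn).trans (Nat.dvd_div_of_mul_dvd ?_)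
      rwa [mul_comm]
    obtain ⟨m', h1, h2⟩ := realize hB hP hs0 hgood (fun i hi hiP => by
      have hiZ : i ∈ Z := by
        rw [hZdef, Finset.mem_filter]
        rw [hPdef, Finset.mem_filter, not_and, not_not] at hiP
        exact ⟨Finset.mem_range.2 hi, hiP (Finset.mem_range.2 hi)⟩
      exact ⟨c i, Cset_subset_Dt B (Bprime_subset (hcB i hiZ)),
        dvd_mul_of_dvd_right (Finset.dvd_prod_of_mem c hiZ) _, hcm i hiZ⟩)
    refine ⟨m', fun i hi => ?_⟩
    rw [Bool.eq_iff_iff, eta_eq_true, eta_eq_true]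
    constructor
    · intro h hB'
      exact h1 i (Finset.mem_filter.2 ⟨Finset.mem_range.2 hi, h⟩) (MB_subset_Bprime hB hB')
    · intro h hB'
      refine h (h2 i hi fun hiP => ?_)
      exact (Finset.mem_filter.1 hiP).2 hB'

theorem perSet_Per (x : ℤ → Bool) (s : ℕ) : PerSet (Per x s) s := by
  intro i
  unfold Per
  simp only [Set.mem_ofPred_eq]
  constructor
  · intro h k
    have h1 := h (k - 1)
    have h2 := h (-1)
    have e1 : i + s + s * (k - 1) = i + s * k := by ring
    have e2 : i + (s : ℤ) + s * (-1) = i := by ring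
    rw [e1] at h1; rw [e2] at h2
    rw [h1, h2]
  · intro h k
    have h1 := h (k + 1)
    have h2 := h 1
    have e1 : i + s * (k + 1) = i + s + s * k := by ring
    rw [e1] at h1; rw [mul_one] at h2
    rw [h1, h2]

theorem perSet_iUnion_Per (x : ℤ → Bool) (r : ℕ) :
    PerSet (⋃ s ∈ Finset.Icc 1 r, Per x s) r.factorial := by
  intro i
  simp only [Set.mem_iUnion]
  refine exists_congr fun s => exists_congr fun hs => ?_
  rw [Finset.mem_Icc] at hs
  exact (perSet_Per x s).of_dvd (Nat.dvd_factorial (by omega) hs.2) i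

/-- The density of a union of residue classes is read off from one period. -/
theorem natDensity_perSet {S : Set ℤ} {M : ℕ} (hM : 0 < M) (h : PerSet S M) {d : ℝ}
    (hd : natDensity S d) : wc S 0 M = d * M := by
  have hM' : (0 : ℝ) < M := by exact_mod_cast hM
  have hcnt : ∀ L : ℕ, cnt S L = wc S 1 L := by
    intro L
    rw [wc_card, Finset.card_filter]
    push_cast
    unfold cnt
    refine Finset.sum_congr ?_ fun _ _ => rfl
    ext; rw [Finset.mem_Icc, Finset.mem_Ico]; omega
  have h1 : Tendsto (fun k : ℕ => (k + 1) * M) atTop atTop :=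
    tendsto_atTop_mono (fun k => by simp only [id]; nlinarith) tendsto_id
  have h2 := Tendsto.comp hd h1
  have h3 : (fun L : ℕ => cnt S L / L) ∘ (fun k : ℕ => (k + 1) * M) = fun _ => wc S 0 M / M := by
    funext k
    simp only [Function.comp]
    rw [hcnt, h.wc_mul]
    push_cast
    rw [mul_div_mul_left _ _ (by positivity)]
  rw [h3] at h2
  have h4 := tendsto_nhds_unique tendsto_const_nhds h2
  rw [← h4]; field_simp

/-! ### Invariant measures -/

theorem small_dvd {q : ℕ} (hq : 0 < q) : BSmall {x : ℤ | (q : ℤ) ∣ x} (1 / q) := by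
  refine ⟨q, hq, fun t => ?_⟩
  have h := wc_AP 0 t hq
  simp only [sub_zero] at h
  rw [h]
  have : (0 : ℝ) < q := by exact_mod_cast hq
  rw [one_div_mul_cancel this.ne']

/-- A word not occurring in `eta (Bprime B)` has occurrences of Banach density zero in `eta B`. -/
theorem small_occ {B : Set ℕ} (hB : 0 ∉ B) (hreg : RegularToeplitz (etaStar B)) {n : ℕ}
    {P : Finset ℕ} (hP : P ⊆ Finset.range n) (hno : ∀ m, ¬ Occ (eta (Bprime B)) n P m)
    {ε : ℝ} (hε : 0 < ε) : BSmall {m | Occ (eta B) n P m} ε := by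
  obtain ⟨-, δ, hδ, hlim⟩ := hreg
  have hε' : 0 < ε / (3 * (n + 1)) := by positivity
  -- periodic positions of `etaStar B` up to a small set
  obtain ⟨r, hr⟩ := (hlim.eventually (lt_mem_nhds
    (show 1 - ε / (3 * (n + 1)) < 1 by linarith))).exists
  set G : Set ℤ := ⋃ s ∈ Finset.Icc 1 r, Per (etaStar B) s with hG
  have hperG : PerSet G r.factorial := perSet_iUnion_Per _ _
  have ha : BSmall Gᶜ (ε / (3 * (n + 1))) := by
    refine ⟨r.factorial, Nat.factorial_pos _, fun t => ?_⟩
    have h1 := wc_compl G t r.factorial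
    rw [hperG.wc_eq, natDensity_perSet (Nat.factorial_pos r) hperG (hδ r)] at h1
    have h2 : (0 : ℝ) < r.factorial := by exact_mod_cast Nat.factorial_pos r
    nlinarith
  -- multiples of high powers of primes `p ≤ n`, where the first condition of `Good` may fail
  obtain ⟨e, he⟩ := exists_pow_lt_of_lt_one
    (show 0 < ε / (3 * (n + 1)) / (n + 1) by positivity) (show (1 / 2 : ℝ) < 1 by norm_num)
  set s : ℕ := r.factorial * n.factorial ^ e with hs
  have hs0 : 0 < s := Nat.mul_pos (Nat.factorial_pos _) (pow_pos (Nat.factorial_pos _) _)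
  have hb : BSmall (⋃ p ∈ (Finset.range (n + 1)).filter Nat.Prime,
      {x : ℤ | ((p ^ e : ℕ) : ℤ) ∣ x}) (ε / (3 * (n + 1))) := by
    refine (BSmall.biUnion _ _ (fun p : ℕ => 1 / ((p ^ e : ℕ) : ℝ)) fun p hp =>
      small_dvd (pow_pos (Finset.mem_filter.1 hp).2.pos e)).mono le_rfl ?_
    refine (Finset.sum_le_card_nsmul _ _ (ε / (3 * (n + 1)) / (n + 1)) fun p hp => ?_).trans ?_
    · refine le_trans ?_ he.le
      push_cast
      rw [← one_div_pow]
      have : (2 : ℝ) ≤ p := by exact_mod_cast (Finset.mem_filter.1 hp).2.two_le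
      gcongr
    · have hcard : (((Finset.range (n + 1)).filter Nat.Prime).card : ℝ) ≤ n + 1 := by
        have := Finset.card_filter_le (Finset.range (n + 1)) Nat.Prime
        rw [Finset.card_range] at this
        exact_mod_cast this
      rw [nsmul_eq_mul]
      calc _ ≤ ((n : ℝ) + 1) * (ε / (3 * (n + 1)) / (n + 1)) := by gcongr
        _ = _ := by field_simp
  -- free numbers divisible by an element of `Cset B`, where the second condition may fail
  have hc : BSmall (⋃ c ∈ s.divisors.filter (· ∈ Cset B), {l : ℤ | (c : ℤ) ∣ l ∧ l ∉ MB B})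
      (ε / (3 * (n + 1))) := by
    refine (BSmall.biUnion _ _ (fun _ => ε / (3 * (n + 1)) / (s.divisors.card + 1)) fun c hc =>
      small_of_mem_Cset hB (Finset.mem_filter.1 hc).2 (by positivity)).mono le_rfl ?_
    rw [Finset.sum_const, nsmul_eq_mul]
    have hcard : ((s.divisors.filter (· ∈ Cset B)).card : ℝ) ≤ s.divisors.card + 1 := by
      have := Finset.card_filter_le s.divisors (· ∈ Cset B)
      have h2 : ((s.divisors.filter (· ∈ Cset B)).card : ℝ) ≤ s.divisors.card := by
        exact_mod_cast this
      linarith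
    calc _ ≤ ((s.divisors.card : ℝ) + 1) * (ε / (3 * (n + 1)) / (s.divisors.card + 1)) := by gcongr
      _ = _ := by field_simp
  have hall := BSmall.biUnion (Finset.range n) _ (fun _ => _) fun i _ =>
    ((ha.union hb).union hc).translate (i : ℤ)
  refine hall.mono ?_ ?_
  · intro m hm
    by_contra hout
    simp only [Set.mem_iUnion, Finset.mem_range, not_exists, Set.mem_ofPred_eq, Set.mem_union,
      not_or] at hout
    have hgood : Good (Bprime B) n P m s := by
      intro i hi
      have hin := Finset.mem_range.1 (hP hi)
      obtain ⟨⟨-, ho2⟩, ho3⟩ := hout i hin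
      refine ⟨fun p hp hpn => ?_, fun c hc hcs hcm => ?_⟩
      · by_contra hpd
        set g := Int.gcd (m + i) s with hg
        have hgs : g ∣ s := Int.natCast_dvd_natCast.1 (Int.gcd_dvd_right _ _)
        have h1 : p ^ e ∣ s := dvd_mul_of_dvd_right
          (pow_dvd_pow_of_dvd (Nat.dvd_factorial hp.pos hpn) e) _
        rw [← Nat.mul_div_cancel' hgs] at h1
        have h2 : p ^ e ∣ g := (Nat.Coprime.pow_left e
          ((hp.coprime_iff_not_dvd).2 hpd)).dvd_of_dvd_mul_right h1
        refine ho2 p (Finset.mem_filter.2 ⟨Finset.mem_range.2 (by omega), hp⟩) ?_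
        exact (Int.natCast_dvd_natCast.2 h2).trans (Int.gcd_dvd_left _ _)
      · refine ho3 c (Finset.mem_filter.2 ⟨Nat.mem_divisors.2 ⟨hcs, hs0.ne'⟩, Bprime_subset hc⟩)
          ⟨hcm, ?_⟩
        exact (eta_eq_true _ _).1 ((hm i hin).2 hi)
    obtain ⟨m', h1, h2⟩ := realize hB hP hs0 hgood (fun i hi hiP => by
      obtain ⟨⟨ho1, -⟩, -⟩ := hout i hi
      have hmem : m + i ∈ MB B := by
        by_contra hcon
        exact hiP ((hm i hi).1 ((eta_eq_true _ _).2 hcon))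
      rw [Set.mem_compl_iff, not_not, hG] at ho1
      simp only [Set.mem_iUnion, Finset.mem_Icc] at ho1
      obtain ⟨s₁, ⟨hs1, hsr⟩, hper⟩ := ho1
      refine exists_Dt_of_class hs0 fun k => ?_
      have hds : s₁ ∣ s := dvd_mul_of_dvd_left (Nat.dvd_factorial (by omega) hsr) _
      obtain ⟨s₂, hs₂⟩ := hds
      have h := hper (s₂ * k)
      have e1 : m + i + (s₁ : ℤ) * (s₂ * k) = m + i + s * k := by rw [hs₂]; push_cast; ring
      rw [e1] at h
      by_contra hcon
      have h3 : etaStar B (m + i + s * k) = true := (eta_eq_true _ _).2 hcon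
      rw [h] at h3
      exact (eta_eq_true _ _).1 h3 (MB_subset_Bstar hB hmem))
    refine hno m' fun i hi => ?_
    rw [eta_eq_true]
    refine ⟨fun h => ?_, h1 i⟩
    by_contra hiP
    exact h (MB_subset_Bprime hB (h2 i hi hiP))
  · rw [Finset.sum_const, Finset.card_range, nsmul_eq_mul]
    have : (n : ℝ) * (ε / (3 * (n + 1)) + ε / (3 * (n + 1)) + ε / (3 * (n + 1))) =
        ε * (n / (n + 1)) := by field_simp; ring
    rw [this]
    have h2 : (n : ℝ) / (n + 1) ≤ 1 := by rw [div_le_one (by positivity)]; linarith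
    nlinarith

/-- The orbit closure consists of the sequences all of whose words occur in `z`. -/
theorem mem_orbitClosure {z x : ℤ → Bool} : x ∈ orbitClosure z ↔
    ∀ (t : ℤ) (n : ℕ), ∃ m : ℤ, ∀ i < n, x (t + (i : ℕ)) = z (m + (i : ℕ)) := by
  unfold orbitClosure
  rw [mem_closure_iff]
  constructor
  · intro h t n
    have hopen : IsOpen (⋂ i ∈ Finset.range n, {y : ℤ → Bool | y (t + (i : ℕ)) = x (t + (i : ℕ))}) :=
      isOpen_biInter_finset fun i _ => by
        change IsOpen ((fun y : ℤ → Bool => y (t + (i : ℕ))) ⁻¹' {x (t + (i : ℕ))})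
        exact (isOpen_discrete _).preimage (continuous_apply _)
    obtain ⟨y, hy, m, rfl⟩ := h _ hopen (by simp)
    refine ⟨t + m, fun i hi => ?_⟩
    simp only [Set.mem_iInter, Finset.mem_range] at hy
    have := hy i hi
    rw [Set.mem_ofPred_eq] at this
    rw [← this]; ring_nf
  · intro h U hU hx
    obtain ⟨I, u, hu, hsub⟩ := isOpen_pi_iff.1 hU x hx
    obtain ⟨N, hN⟩ : ∃ N : ℕ, ∀ i ∈ I, i.natAbs ≤ N :=
      ⟨I.sup Int.natAbs, fun i hi => Finset.le_sup (f := Int.natAbs) hi⟩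
    obtain ⟨m, hm⟩ := h (-N) (2 * N + 1)
    refine ⟨_, hsub ?_, m + N, rfl⟩
    intro i hi
    have h1 := hN i hi
    have h2 := hm (i + N).toNat (by omega)
    have e1 : -(N : ℤ) + ((i + N).toNat : ℕ) = i := by omega
    have e2 : m + ((i + N).toNat : ℕ) = i + (m + N) := by omega
    rw [e1, e2] at h2
    show z (i + (m + N)) ∈ u i
    rw [← h2]; exact (hu i hi).2

theorem Xeta_Bprime_subset {B : Set ℕ} (hB : 0 ∉ B) : Xeta (Bprime B) ⊆ Xeta B := by
  intro x hx
  refine mem_orbitClosure.2 fun t n => ?_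
  obtain ⟨m, hm⟩ := mem_orbitClosure.1 hx t n
  obtain ⟨m', hm'⟩ := occ_of_occ_prime hB m n
  exact ⟨m', fun i hi => (hm i hi).trans (hm' i hi)⟩

theorem measurable_shift : Measurable shift :=
  measurable_pi_iff.2 fun n => measurable_pi_apply (n + 1)

theorem measurableSet_occ (n : ℕ) (P : Finset ℕ) (t : ℤ) :
    MeasurableSet {x : ℤ → Bool | Occ x n P t} := by
  have : {x : ℤ → Bool | Occ x n P t} =
      ⋂ i ∈ Finset.range n, {x : ℤ → Bool | x (t + (i : ℕ)) = decide (i ∈ P)} := by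
    ext x
    simp only [Occ, Set.mem_ofPred_eq, Set.mem_iInter, Finset.mem_range]
    refine forall_congr' fun i => forall_congr' fun _ => ?_
    by_cases h : i ∈ P <;> simp [h]
  rw [this]
  refine Finset.measurableSet_biInter _ fun i _ => ?_
  change MeasurableSet ((fun y : ℤ → Bool => y (t + (i : ℕ))) ⁻¹' {decide (i ∈ P)})
  exact measurable_pi_apply _ (measurableSet_singleton _)

/-- A word whose occurrences in `z` have small Banach density has small measure for each invariant
measure on the orbit closure of `z`. -/
theorem measure_occ_le {z : ℤ → Bool} {μ : Measure (ℤ → Bool)} (hμ : μ ∈ InvM (orbitClosure z))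
    {n : ℕ} {P : Finset ℕ} {ε : ℝ} (h : BSmall {m | Occ z n P m} ε) (t : ℤ) :
    μ {x | Occ x n P t} ≤ ENNReal.ofReal ε := by
  obtain ⟨hprob, hinv, hX⟩ := hμ
  obtain ⟨M, hM, hs⟩ := h
  have hshift : ∀ j : ℕ, μ {x | Occ x n P (t + j)} = μ {x | Occ x n P t} := by
    intro j
    induction j with
    | zero => simp
    | succ j ih =>
      rw [← ih]
      conv_rhs => rw [← hinv, Measure.map_apply measurable_shift (measurableSet_occ _ _ _)]
      congr 1
      ext x
      simp only [Set.mem_ofPred_eq, Set.mem_preimage, Occ, shift]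
      refine forall_congr' fun i => forall_congr' fun _ => ?_
      have : t + ((j + 1 : ℕ) : ℤ) + (i : ℕ) = t + (j : ℕ) + (i : ℕ) + 1 := by push_cast; ring
      rw [this]
  have hae : ∀ᵐ x ∂μ, x ∈ orbitClosure z := by
    have hcl : MeasurableSet (orbitClosure z) := isClosed_closure.measurableSet
    exact (prob_compl_eq_zero_iff hcl).2 hX
  have hsum : ∑ j ∈ Finset.range M, μ {x | Occ x n P (t + j)} ≤ ENNReal.ofReal (ε * M) := by
    have h1 : ∀ j ∈ Finset.range M, μ {x | Occ x n P (t + j)} =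
        ∫⁻ x, Set.indicator {x | Occ x n P (t + j)} 1 x ∂μ := fun j _ =>
      (lintegral_indicator_one (measurableSet_occ _ _ _)).symm
    rw [Finset.sum_congr rfl h1, ← lintegral_finsetSum _ fun j _ =>
      measurable_one.indicator (measurableSet_occ _ _ _)]
    calc _ ≤ ∫⁻ _, ENNReal.ofReal (ε * M) ∂μ := by
          refine lintegral_mono_ae ?_
          filter_upwards [hae] with x hx
          obtain ⟨m, hm⟩ := mem_orbitClosure.1 hx t (M + n)
          have h2 := ENNReal.ofReal_le_ofReal (hs m)
          refine le_trans (le_of_eq ?_) h2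
          unfold wc
          rw [ENNReal.ofReal_sum_of_nonneg fun _ _ => ind_nonneg _ _]
          refine Finset.sum_congr rfl fun j hj => ?_
          rw [Finset.mem_range] at hj
          have hiff : Occ x n P (t + j) ↔ Occ z n P (m + j) := by
            refine forall_congr' fun i => forall_congr' fun hi => ?_
            have := hm (j + i) (by omega)
            push_cast at this
            rw [add_assoc, add_assoc, this]
          by_cases hx : Occ x n P (t + j)
          · rw [Set.indicator_of_mem hx, ind_of_mem (hiff.1 hx)]; simp
          · rw [Set.indicator_of_notMem hx, ind_of_notMem (fun h => hx (hiff.2 h))]; simp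
      _ = _ := by simp
  rw [Finset.sum_congr rfl fun j _ => hshift j, Finset.sum_const, Finset.card_range,
    nsmul_eq_mul, mul_comm ε, ENNReal.ofReal_mul (by positivity), ENNReal.ofReal_natCast] at hsum
  exact (ENNReal.mul_le_mul_iff_right (by exact_mod_cast hM.ne') (by simp)).1 hsum

/-- for `𝓑` with regular Toeplitz `η*`, `P(X_η) = P(X_{η'})`,
where `𝓑'` is the tautification of `𝓑`. -/
theorem statement2 (B : Set ℕ) (hB : 0 ∉ B)
    (hreg : RegularToeplitz (etaStar B)) :
    InvM (Xeta B) = InvM (Xeta (Bprime B)) := by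
  apply Set.Subset.antisymm
  · intro μ hμ
    obtain ⟨hprob, hinv, hX⟩ := id hμ
    refine ⟨hprob, hinv, ?_⟩
    have hcl : MeasurableSet (Xeta (Bprime B)) := isClosed_closure.measurableSet
    rw [← prob_compl_eq_zero_iff hcl]
    -- the complement is covered by the countably many cylinders on words absent from `η'`
    have hcov : (Xeta (Bprime B))ᶜ ⊆ ⋃ (t : ℤ) (n : ℕ) (P : Finset ℕ)
        (_ : P ⊆ Finset.range n ∧ ∀ m, ¬ Occ (eta (Bprime B)) n P m), {x | Occ x n P t} := by
      intro x hx
      have hx' : ¬ ∀ (t : ℤ) (n : ℕ), ∃ m : ℤ, ∀ i < n,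
          x (t + (i : ℕ)) = eta (Bprime B) (m + (i : ℕ)) := fun h => hx (mem_orbitClosure.2 h)
      push Not at hx'
      obtain ⟨t, n, hm⟩ := hx'
      simp only [Set.mem_iUnion]
      refine ⟨t, n, (Finset.range n).filter (fun i => x (t + (i : ℕ)) = true),
        ⟨Finset.filter_subset _ _, fun m hocc => ?_⟩, fun i hi => ?_⟩
      · obtain ⟨i, hi, hne⟩ := hm m
        refine hne ?_
        rw [Bool.eq_iff_iff, hocc i hi, Finset.mem_filter, Finset.mem_range]
        exact ⟨fun h => ⟨hi, h⟩, fun h => h.2⟩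
      · rw [Finset.mem_filter, Finset.mem_range]
        exact ⟨fun h => ⟨hi, h⟩, fun h => h.2⟩
    refine measure_mono_null hcov ?_
    refine measure_iUnion_null fun t => measure_iUnion_null fun n => measure_iUnion_null fun P =>
      measure_iUnion_null fun hP => ?_
    rw [← nonpos_iff_eq_zero]
    refine le_of_forall_pos_le_add fun ε hε => ?_
    rw [zero_add]
    rcases eq_or_ne ε ⊤ with rfl | hε'
    · exact le_top
    · have := measure_occ_le hμ (small_occ hB hreg hP.1 hP.2 (ENNReal.toReal_pos hε.ne' hε')) t
      rwa [ENNReal.ofReal_toReal hε'] at this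
  · rintro μ ⟨hprob, hinv, hX⟩
    refine ⟨hprob, hinv, le_antisymm prob_le_one ?_⟩
    rw [← hX]
    exact measure_mono (Xeta_Bprime_subset hB)

end BFree
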